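/- Let d be one of the Kendall tau, Hamming, Spearman footrule or Spearman rank correlation distances on S_∞, let (σ_i)_{i≥1} be a sequence in S_∞ satisfying Conditions 1 and 2, let Θ = Π_{i=1}^3 [θ_{i,min},θ_{i,max}] with 0 < θ_{i,min} ≤ θ_{i,max} < ∞, and let θ* ∈ Θ. For each n, let y^{(n)} be a centered Gaussian random vector in ℝ^n with covariance matrix R_{θ*} = (K'_{θ*}(σ_i,σ_j))_{1≤i,j≤n}, and let L_n(θ) = (1/n)·ln det R_θ + (1/n)·(y^{(n)})ᵀ R_θ^{−1} y^{(n)} with R_θ = (K'_θ(σ_i,σ_j))_{1≤i,j≤n}. Let θ̂_n be any random vector, measurable with respect to y^{(n)}, satisfying θ̂_n ∈ argmin_{θ∈Θ} L_n(θ) almost surely. Then θ̂_n converges to θ* in probability: for every ε > 0, P(‖θ̂_n − θ*‖ > ε) → 0 as n → ∞. -/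

import Mathlib

/-!
The argument compares the negative log-likelihood at `θ` with its value at the true parameter `θ*`.

Each of the four distances is a squared `ℓ²` distance (`SInf.SqEmb`), so by Schoenberg's theorem
(`SInf.SqEmb.exp_nonneg`) the matrices `exp (-θ₁ d)` are positive semidefinite and the spectrum of
`R_θ` is bounded below by `θ₃`. Condition 1 makes the row sums of `exp (-a d)` bounded uniformly in
`n`; with the Schur test this bounds `R_θ` above (`Rmat_upper`) and makes `θ ↦ R_θ` Lipschitz as a
quadratic form, uniformly in `n` (`Rmat_sub_quad`).

For a fixed `θ₀ ≠ θ*` the matrices `R_θ*` and `R_θ₀` can be diagonalized simultaneously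
(`exists_simul_diag`). In that basis the expected difference of log-likelihoods is a sum of terms
`μ - 1 - log μ`, which dominates the squared Frobenius distance of the two matrices, while its
variance is `O(n)`; Chebyshev's inequality (`gaussian_chebyshev`) gives `prob_lower`. The Frobenius
distance is of order `n` (`frobenius_identifiable`): by Condition 2 the distances at lag `1` and at
a large lag `k` lie in two disjoint compact intervals, and two exponentials `b exp (-a t)` that agree
at two points coincide, while the diagonal entries determine `θ₃`.

`perturb_lower` makes the estimate uniform over a neighbourhood of `θ₀` (`local_consistency`), and
compactness of `{θ ∈ Θ | ε ≤ ‖θ - θ*‖}` reduces the theorem to finitely many such neighbourhoods.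
-/

open scoped Classical

/-- `S_∞`: the group of finitely supported permutations of `ℕ`. -/
def SInf : Type := {σ : Equiv.Perm ℕ // {i | σ i ≠ i}.Finite}

namespace SInf

/-- Kendall's tau distance on `S_∞`. -/
noncomputable def dKen (π σ : SInf) : ℝ :=
  ({p : ℕ × ℕ | p.1 < p.2 ∧
    ((σ.1 p.2 < σ.1 p.1 ∧ π.1 p.1 < π.1 p.2) ∨
      (σ.1 p.1 < σ.1 p.2 ∧ π.1 p.2 < π.1 p.1))}).ncard

/-- Hamming distance on `S_∞`. -/
noncomputable def dHam (π σ : SInf) : ℝ := ({i : ℕ | π.1 i ≠ σ.1 i}).ncard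

/-- Spearman's footrule distance on `S_∞`. -/
noncomputable def dFoot (π σ : SInf) : ℝ := ∑' i : ℕ, |(π.1 i : ℝ) - (σ.1 i : ℝ)|

/-- Spearman's rank correlation distance on `S_∞`. -/
noncomputable def dS2 (π σ : SInf) : ℝ := ∑' i : ℕ, ((π.1 i : ℝ) - (σ.1 i : ℝ)) ^ 2

/-- Condition 1: `d(σ_i, σ_j) ≥ |i − j|^β` for some `β > 0`. -/
def Cond1 (d : SInf → SInf → ℝ) (σ : ℕ → SInf) : Prop :=
  ∃ β : ℝ, 0 < β ∧ ∀ i j : ℕ, |(i : ℝ) - (j : ℝ)| ^ β ≤ d (σ i) (σ j)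

/-- Condition 2: `d(σ_i, σ_{i+1}) ≤ c` for some `c > 0`. -/
def Cond2 (d : SInf → SInf → ℝ) (σ : ℕ → SInf) : Prop :=
  ∃ c : ℝ, 0 < c ∧ ∀ i : ℕ, d (σ i) (σ (i + 1)) ≤ c

/-- The covariance kernel `K'_θ(σ,σ') = θ₂ exp(−θ₁ d(σ,σ')) + θ₃ 1_{σ=σ'}`,
for `θ = (θ 0, θ 1, θ 2)`. -/
noncomputable def Kp (d : SInf → SInf → ℝ) (θ : Fin 3 → ℝ) (s s' : SInf) : ℝ :=
  θ 1 * Real.exp (-(θ 0) * d s s') + (if s = s' then θ 2 else 0)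

end SInf

open MeasureTheory ProbabilityTheory Matrix

/-- The covariance matrix `R_θ = (K'_θ(σ_i,σ_j))_{1≤i,j≤n}`. -/
noncomputable def Rmat (d : SInf → SInf → ℝ) (σ : ℕ → SInf) (θ : Fin 3 → ℝ) (n : ℕ) :
    Matrix (Fin n) (Fin n) ℝ :=
  Matrix.of fun i j : Fin n => SInf.Kp d θ (σ i.1) (σ j.1)

/-- The (normalized) negative log-likelihood
`L_θ = (1/n) ln det R_θ + (1/n) yᵀ R_θ⁻¹ y`. -/
noncomputable def Lfun (d : SInf → SInf → ℝ) (σ : ℕ → SInf) (n : ℕ) (θ : Fin 3 → ℝ)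
    (y : Fin n → ℝ) : ℝ :=
  (1 / (n : ℝ)) * Real.log (Rmat d σ θ n).det
    + (1 / (n : ℝ)) * (y ⬝ᵥ ((Rmat d σ θ n)⁻¹ *ᵥ y))

/-! ### Moments and concentration for Gaussian vectors -/

/-- The moments are the derivatives at zero of the moment generating function `exp (v t² / 2)`. -/
lemma gaussian_moments (v : NNReal) :
    ∫ x, x ^ 2 ∂(gaussianReal 0 v) = v ∧ ∫ x, x ^ 4 ∂(gaussianReal 0 v) = 3 * (v : ℝ) ^ 2 := by
  have hm : ∀ k : ℕ, ∫ x, x ^ k ∂(gaussianReal 0 v)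
      = iteratedDeriv k (fun t : ℝ => Real.exp (v * t ^ 2 / 2)) 0 := by
    intro k
    have := iteratedDeriv_mgf_zero (X := fun x : ℝ => x) (μ := gaussianReal 0 v) (by simp) k
    rw [mgf_fun_id_gaussianReal] at this
    simpa using this.symm
  have hE : ∀ t : ℝ, HasDerivAt (fun t : ℝ => Real.exp (v * t ^ 2 / 2))
      (v * t * Real.exp (v * t ^ 2 / 2)) t := by
    intro t
    have h := (((hasDerivAt_pow 2 t).const_mul (v : ℝ)).div_const 2).exp
    convert h using 1
    simp; ring
  have d1 : deriv (fun t : ℝ => Real.exp (v * t ^ 2 / 2))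
      = fun t : ℝ => v * t * Real.exp (v * t ^ 2 / 2) := funext fun t => (hE t).deriv
  have d2 : deriv (fun t : ℝ => v * t * Real.exp (v * t ^ 2 / 2))
      = fun t : ℝ => (v + v ^ 2 * t ^ 2) * Real.exp (v * t ^ 2 / 2) := by
    funext t
    have h := ((hasDerivAt_id t).const_mul (v : ℝ)).mul (hE t)
    refine h.deriv.trans ?_
    simp only [id]; ring
  have d3 : deriv (fun t : ℝ => (v + v ^ 2 * t ^ 2) * Real.exp (v * t ^ 2 / 2))
      = fun t : ℝ => (3 * v ^ 2 * t + v ^ 3 * t ^ 3) * Real.exp (v * t ^ 2 / 2) := by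
    funext t
    have h := (((hasDerivAt_pow 2 t).const_mul ((v : ℝ) ^ 2)).const_add (v : ℝ)).mul (hE t)
    refine h.deriv.trans ?_
    simp; ring
  have d4 : deriv (fun t : ℝ => (3 * (v : ℝ) ^ 2 * t + v ^ 3 * t ^ 3) * Real.exp (v * t ^ 2 / 2)) 0
      = 3 * (v : ℝ) ^ 2 := by
    have h := (((hasDerivAt_id (0 : ℝ)).const_mul (3 * (v : ℝ) ^ 2)).add
      ((hasDerivAt_pow 3 (0 : ℝ)).const_mul ((v : ℝ) ^ 3))).mul (hE 0)
    refine h.deriv.trans ?_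
    simp
  constructor
  · rw [hm, iteratedDeriv_succ, iteratedDeriv_one, d1, d2]; simp
  · rw [hm, iteratedDeriv_succ, iteratedDeriv_succ, iteratedDeriv_succ, iteratedDeriv_one,
      d1, d2, d3, d4]

section
variable {Ω : Type*} [MeasurableSpace Ω] {P : Measure Ω}

lemma gaussian_law_moments {X : Ω → ℝ} (hX : Measurable X) {μ : ℝ} (hμ : 0 ≤ μ)
    (h : P.map X = gaussianReal 0 μ.toNNReal) :
    ∫ ω, X ω ^ 2 ∂P = μ ∧ ∫ ω, X ω ^ 4 ∂P = 3 * μ ^ 2 := by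
  have := gaussian_moments μ.toNNReal
  rw [← h, integral_map hX.aemeasurable (by fun_prop), integral_map hX.aemeasurable (by fun_prop),
    Real.coe_toNNReal _ hμ] at this
  exact this

lemma gaussian_law_memLp {X : Ω → ℝ} (hX : Measurable X) {v : NNReal}
    (h : P.map X = gaussianReal 0 v) : MemLp X 4 P := by
  have := memLp_id_gaussianReal' (μ := 0) (v := v) 4 (by simp)
  rw [← h, memLp_map_measure_iff (by fun_prop) hX.aemeasurable] at this
  simpa using this

lemma memLp_sq_of_four {X : Ω → ℝ} (hX : MemLp X 4 P) : MemLp (fun ω => X ω ^ 2) 2 P := by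
  have : ENNReal.HolderTriple 4 4 2 := ⟨by
    rw [← ENNReal.toReal_eq_toReal_iff' (by simp) (by simp)]
    rw [ENNReal.toReal_add (by simp) (by simp)]; simp; norm_num⟩
  have h := MemLp.mul (p := 4) (q := 4) (r := 2) hX hX
  convert h using 1
  funext ω; simp [sq]

/-- Distinct coordinates of a centered Gaussian vector with diagonal covariance have uncorrelated
squares; this is read off from the fourth moments of `X + Y` and `X - Y`. -/
lemma gaussian_cross_moment {X Y : Ω → ℝ} (hX : Measurable X) (hY : Measurable Y) {μ ν : ℝ}
    (hμ : 0 ≤ μ) (hν : 0 ≤ ν)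
    (h1 : P.map X = gaussianReal 0 μ.toNNReal) (h2 : P.map Y = gaussianReal 0 ν.toNNReal)
    (h3 : P.map (fun ω => X ω + Y ω) = gaussianReal 0 (μ + ν).toNNReal)
    (h4 : P.map (fun ω => X ω - Y ω) = gaussianReal 0 (μ + ν).toNNReal) :
    ∫ ω, X ω ^ 2 * Y ω ^ 2 ∂P = μ * ν := by
  have e1 := (gaussian_law_moments hX hμ h1).2
  have e2 := (gaussian_law_moments hY hν h2).2
  have e3 := (gaussian_law_moments (hX.add hY) (by positivity) h3).2
  have e4 := (gaussian_law_moments (hX.sub hY) (by positivity) h4).2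
  have m1 := gaussian_law_memLp hX h1
  have m2 := gaussian_law_memLp hY h2
  have i1 : Integrable (fun ω => X ω ^ 4) P := by
    have := (memLp_sq_of_four m1).integrable_sq
    convert this using 2; ring
  have i2 : Integrable (fun ω => Y ω ^ 4) P := by
    have := (memLp_sq_of_four m2).integrable_sq
    convert this using 2; ring
  have i3 : Integrable (fun ω => (X ω + Y ω) ^ 4) P := by
    have := (memLp_sq_of_four (gaussian_law_memLp (hX.add hY) h3)).integrable_sq
    convert this using 2; simp only [Pi.add_apply]; ring
  have i4 : Integrable (fun ω => (X ω - Y ω) ^ 4) P := by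
    have := (memLp_sq_of_four (gaussian_law_memLp (hX.sub hY) h4)).integrable_sq
    convert this using 2; simp only [Pi.sub_apply]; ring
  have key : ∀ ω, X ω ^ 2 * Y ω ^ 2
      = (1 / 12 : ℝ) * (((X ω + Y ω) ^ 4 + (X ω - Y ω) ^ 4) - 2 * (X ω ^ 4 + Y ω ^ 4)) := by
    intro ω; ring
  simp only [Pi.add_apply, Pi.sub_apply] at e3 e4
  simp_rw [key]
  have i34 : Integrable (fun ω => (X ω + Y ω) ^ 4 + (X ω - Y ω) ^ 4) P := i3.add i4
  have i12 : Integrable (fun ω => 2 * (X ω ^ 4 + Y ω ^ 4)) P := (i1.add i2).const_mul 2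
  rw [integral_const_mul, integral_sub i34 i12, integral_const_mul,
    integral_add i3 i4, integral_add i1 i2, e1, e2, e3, e4]
  ring

/-- Chebyshev's inequality for a diagonal quadratic form in a Gaussian vector with diagonal
covariance. Only the laws of `z k` and `z k ± z l` enter, since the variance is determined by them. -/
lemma gaussian_chebyshev [IsProbabilityMeasure P] {ι : Type*} [Fintype ι] {z : ι → Ω → ℝ}
    (hz : ∀ k, Measurable (z k))
    {μ : ι → ℝ} (hμ : ∀ k, 0 ≤ μ k)
    (h1 : ∀ k, P.map (z k) = gaussianReal 0 (μ k).toNNReal)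
    (h2 : ∀ k l, k ≠ l → P.map (fun ω => z k ω + z l ω) = gaussianReal 0 (μ k + μ l).toNNReal)
    (h3 : ∀ k l, k ≠ l → P.map (fun ω => z k ω - z l ω) = gaussianReal 0 (μ k + μ l).toNNReal)
    {b : ι → ℝ} {B : ℝ} (hb : ∀ k, |b k * μ k| ≤ B) {h : ℝ} (hh : 0 < h) :
    P {ω | h ≤ |∑ k, b k * (z k ω ^ 2 - μ k)|} ≤
      ENNReal.ofReal (2 * (Fintype.card ι) * B ^ 2 / h ^ 2) := by
  have mz : ∀ k, MemLp (fun ω => z k ω ^ 2) 2 P := fun k =>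
    memLp_sq_of_four (gaussian_law_memLp (hz k) (h1 k))
  have mc : ∀ k, MemLp (fun ω => z k ω ^ 2 - μ k) 2 P := fun k => (mz k).sub (memLp_const _)
  have mX : MemLp (fun ω => ∑ k, b k * (z k ω ^ 2 - μ k)) 2 P :=
    memLp_finsetSum _ fun k _ => (mc k).const_mul (b k)
  have i2 : ∀ k, Integrable (fun ω => z k ω ^ 2) P := fun k => (mz k).integrable (by norm_num)
  have ic : ∀ k, Integrable (fun ω => z k ω ^ 2 - μ k) P := fun k =>
    (i2 k).sub (integrable_const _)
  have e0 : ∀ k, ∫ ω, (z k ω ^ 2 - μ k) ∂P = 0 := by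
    intro k
    rw [integral_sub (i2 k) (integrable_const _), (gaussian_law_moments (hz k) (hμ k) (h1 k)).1]
    simp
  have eX : ∫ ω, ∑ k, b k * (z k ω ^ 2 - μ k) ∂P = 0 := by
    rw [integral_finsetSum _ fun k _ => (ic k).const_mul (b k)]
    simp [integral_const_mul, e0]
  have imul : ∀ k l, Integrable (fun ω => (z k ω ^ 2 - μ k) * (z l ω ^ 2 - μ l)) P :=
    fun k l => (mc k).integrable_mul (mc l)
  have imul' : ∀ k l, Integrable (fun ω => z k ω ^ 2 * z l ω ^ 2) P :=
    fun k l => (mz k).integrable_mul (mz l)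
  have ecov : ∀ k l, ∫ ω, (z k ω ^ 2 - μ k) * (z l ω ^ 2 - μ l) ∂P
      = if k = l then 2 * μ k ^ 2 else 0 := by
    intro k l
    have hexp : ∫ ω, (z k ω ^ 2 - μ k) * (z l ω ^ 2 - μ l) ∂P
        = ∫ ω, z k ω ^ 2 * z l ω ^ 2 ∂P - μ k * μ l := by
      have : ∀ ω, (z k ω ^ 2 - μ k) * (z l ω ^ 2 - μ l)
          = (z k ω ^ 2 * z l ω ^ 2 - μ k * μ l)
            - (μ l * (z k ω ^ 2 - μ k) + μ k * (z l ω ^ 2 - μ l)) := fun ω => by ring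
      simp_rw [this]
      have j1 : Integrable (fun ω => z k ω ^ 2 * z l ω ^ 2 - μ k * μ l) P :=
        (imul' k l).sub (integrable_const _)
      have j2 : Integrable (fun ω => μ l * (z k ω ^ 2 - μ k) + μ k * (z l ω ^ 2 - μ l)) P :=
        ((ic k).const_mul _).add ((ic l).const_mul _)
      rw [integral_sub j1 j2,
        integral_add ((ic k).const_mul _) ((ic l).const_mul _), integral_const_mul,
        integral_const_mul, e0, e0, integral_sub (imul' k l) (integrable_const _)]
      simp
    rw [hexp]
    split_ifs with hkl
    · subst hkl
      have := (gaussian_law_moments (hz k) (hμ k) (h1 k)).2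
      have h' : ∫ ω, z k ω ^ 2 * z k ω ^ 2 ∂P = ∫ ω, z k ω ^ 4 ∂P := by
        congr 1; funext ω; ring
      rw [h', this]; ring
    · rw [gaussian_cross_moment (hz k) (hz l) (hμ k) (hμ l) (h1 k) (h1 l) (h2 k l hkl)
        (h3 k l hkl)]; ring
  have eV : variance (fun ω => ∑ k, b k * (z k ω ^ 2 - μ k)) P = ∑ k, 2 * (b k * μ k) ^ 2 := by
    rw [variance_of_integral_eq_zero mX.aestronglyMeasurable.aemeasurable eX]
    have : ∀ ω, (∑ k, b k * (z k ω ^ 2 - μ k)) ^ 2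
        = ∑ k, ∑ l, (b k * b l) * ((z k ω ^ 2 - μ k) * (z l ω ^ 2 - μ l)) := by
      intro ω
      rw [sq, Finset.sum_mul_sum]
      exact Finset.sum_congr rfl fun k _ => Finset.sum_congr rfl fun l _ => by ring
    simp_rw [this]
    rw [integral_finsetSum _ fun k _ => integrable_finsetSum _ fun l _ =>
      (imul k l).const_mul _]
    refine Finset.sum_congr rfl fun k _ => ?_
    rw [integral_finsetSum _ fun l _ => (imul k l).const_mul _]
    simp_rw [integral_const_mul, ecov]
    simp
    ring
  have := meas_ge_le_variance_div_sq mX hh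
  rw [eX, eV] at this
  simp only [sub_zero] at this
  refine this.trans (ENNReal.ofReal_le_ofReal ?_)
  gcongr
  calc ∑ k, 2 * (b k * μ k) ^ 2 ≤ ∑ _k : ι, 2 * B ^ 2 := by
        refine Finset.sum_le_sum fun k _ => ?_
        have : (b k * μ k) ^ 2 ≤ B ^ 2 := sq_le_sq' (by linarith [neg_abs_le (b k * μ k), hb k])
          ((le_abs_self _).trans (hb k))
        linarith
    _ = _ := by simp; ring
end

/-! ### Simultaneous diagonalization -/

section
variable {n : ℕ}

lemma mul_mul_transpose_apply (W A : Matrix (Fin n) (Fin n) ℝ) (k l : Fin n) :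
    (W * A * Wᵀ) k l = W k ⬝ᵥ (A *ᵥ W l) := by
  rw [Matrix.mul_assoc, Matrix.mul_apply]
  rfl

/-- If `A = V Vᵀ` has quadratic form at most `M`, then `V diag(u) Vᵀ` has squared Frobenius norm
at most `M² ∑ uₖ²`. -/
lemma frobenius_conj_le (V A : Matrix (Fin n) (Fin n) ℝ) (u : Fin n → ℝ) (hA : A = V * Vᵀ) {M : ℝ}
    (hM : ∀ x : Fin n → ℝ, x ⬝ᵥ (A *ᵥ x) ≤ M * (x ⬝ᵥ x)) :
    ∑ i, ∑ j, ((V * diagonal u * Vᵀ) i j) ^ 2 ≤ M ^ 2 * ∑ k, u k ^ 2 := by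
  set G : Matrix (Fin n) (Fin n) ℝ := Vᵀ * V with hG
  have hGs : ∀ k l, G k l = G l k := by
    intro k l; simp only [hG, Matrix.mul_apply, transpose_apply]
    exact Finset.sum_congr rfl fun i _ => mul_comm _ _
  have h1 : ∑ i, ∑ j, ((V * diagonal u * Vᵀ) i j) ^ 2 = ∑ k, ∑ l, u k * u l * G k l ^ 2 := by
    have e : ∀ i j, ((V * diagonal u * Vᵀ) i j) ^ 2
        = ∑ k, ∑ l, (u k * u l) * ((V i k * V i l) * (V j k * V j l)) := by
      intro i j
      rw [Matrix.mul_apply]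
      simp only [mul_diagonal, transpose_apply]
      rw [sq, Finset.sum_mul_sum]
      exact Finset.sum_congr rfl fun k _ => Finset.sum_congr rfl fun l _ => by ring
    simp_rw [e]
    have e2 : ∀ k l, u k * u l * G k l ^ 2
        = ∑ i, ∑ j, (u k * u l) * ((V i k * V i l) * (V j k * V j l)) := by
      intro k l
      rw [sq, hG, Matrix.mul_apply]
      simp only [transpose_apply]
      rw [Finset.sum_mul_sum, Finset.mul_sum]
      simp_rw [Finset.mul_sum]
    simp_rw [e2]
    have c1 : ∀ i : Fin n, (∑ j, ∑ k, ∑ l, (u k * u l) * ((V i k * V i l) * (V j k * V j l)))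
        = ∑ k, ∑ l, ∑ j, (u k * u l) * ((V i k * V i l) * (V j k * V j l)) := by
      intro i
      rw [Finset.sum_comm]
      exact Finset.sum_congr rfl fun k _ => Finset.sum_comm
    simp_rw [c1]
    rw [Finset.sum_comm]
    exact Finset.sum_congr rfl fun k _ => Finset.sum_comm
  have h2 : ∀ k, ∑ l, G k l ^ 2 ≤ M ^ 2 := by
    intro k
    have a1 : ∑ l, G k l ^ 2 = Vᵀ k ⬝ᵥ (A *ᵥ Vᵀ k) := by
      have : (Vᵀ * A * Vᵀᵀ) k k = ∑ l, G k l ^ 2 := by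
        have : Vᵀ * A * Vᵀᵀ = G * G := by
          rw [hA, hG]; simp only [transpose_transpose, Matrix.mul_assoc]
        rw [this, Matrix.mul_apply]
        exact Finset.sum_congr rfl fun l _ => by rw [hGs l k, sq]
      rw [← this, mul_mul_transpose_apply]
    have a2 : Vᵀ k ⬝ᵥ Vᵀ k = G k k := by rw [hG]; rfl
    have a3 : ∑ l, G k l ^ 2 ≤ M * G k k := by rw [a1, ← a2]; exact hM _
    have a4 : G k k ^ 2 ≤ ∑ l, G k l ^ 2 :=
      Finset.single_le_sum (f := fun l => G k l ^ 2) (fun l _ => sq_nonneg _) (Finset.mem_univ k)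
    have a5 : 0 ≤ G k k := by
      rw [← a2]; exact Finset.sum_nonneg fun i _ => mul_self_nonneg _
    nlinarith [sq_nonneg (M - G k k)]
  rw [h1]
  have h3 : ∑ k, ∑ l, u k * u l * G k l ^ 2
      ≤ ∑ k, ∑ l, (u k ^ 2 * G k l ^ 2 / 2 + u l ^ 2 * G k l ^ 2 / 2) := by
    refine Finset.sum_le_sum fun k _ => Finset.sum_le_sum fun l _ => ?_
    nlinarith [mul_nonneg (sq_nonneg (u k - u l)) (sq_nonneg (G k l))]
  have h4 : ∑ k, ∑ l, u k ^ 2 * G k l ^ 2 / 2 ≤ M ^ 2 * (∑ k, u k ^ 2) / 2 := by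
    rw [Finset.mul_sum, Finset.sum_div]
    refine Finset.sum_le_sum fun k _ => ?_
    rw [← Finset.sum_div, ← Finset.mul_sum]
    nlinarith [mul_le_mul_of_nonneg_left (h2 k) (sq_nonneg (u k))]
  have h5 : ∑ k, ∑ l, u l ^ 2 * G k l ^ 2 / 2 = ∑ k, ∑ l, u k ^ 2 * G k l ^ 2 / 2 := by
    rw [Finset.sum_comm]
    exact Finset.sum_congr rfl fun k _ => Finset.sum_congr rfl fun l _ => by rw [hGs]
  simp_rw [Finset.sum_add_distrib] at h3
  rw [h5] at h3
  linarith

open scoped MatrixOrder in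
/-- Writing `A = Bᵀ B`, an orthogonal diagonalization of `B⁻ᵀ S B⁻¹` diagonalizes both forms. -/
lemma exists_simul_diag_aux {A S : Matrix (Fin n) (Fin n) ℝ} (hA : A.PosDef) (hS : S.IsHermitian) :
    ∃ (W : Matrix (Fin n) (Fin n) ℝ) (μ : Fin n → ℝ),
      W * A * Wᵀ = 1 ∧ W * S * Wᵀ = diagonal μ := by
  obtain ⟨B, hB, hAB⟩ := CStarAlgebra.isStrictlyPositive_iff_eq_star_mul_self.mp
    hA.isStrictlyPositive
  have hB' : IsUnit B.det := (Matrix.isUnit_iff_isUnit_det B).1 hB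
  have hst : star B = Bᵀ := by
    rw [star_eq_conjTranspose]; exact conjTranspose_eq_transpose_of_trivial B
  rw [hst] at hAB
  set V : Matrix (Fin n) (Fin n) ℝ := (B⁻¹)ᵀ with hV
  have hVA : V * A * Vᵀ = 1 := by
    rw [hAB, hV, transpose_transpose]
    calc (B⁻¹)ᵀ * (Bᵀ * B) * B⁻¹ = ((B⁻¹)ᵀ * Bᵀ) * (B * B⁻¹) := by simp only [Matrix.mul_assoc]
      _ = 1 := by rw [← transpose_mul, Matrix.mul_nonsing_inv _ hB']; simp
  have hX : (V * S * Vᵀ).IsHermitian := by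
    have := isHermitian_mul_mul_conjTranspose V hS
    rwa [conjTranspose_eq_transpose_of_trivial] at this
  have hsp := hX.spectral_theorem
  rw [Unitary.conjStarAlgAut_apply] at hsp
  set Q : Matrix (Fin n) (Fin n) ℝ := (hX.eigenvectorUnitary : Matrix (Fin n) (Fin n) ℝ) with hQ
  have hQs : star Q = Qᵀ := by
    rw [star_eq_conjTranspose]; exact conjTranspose_eq_transpose_of_trivial Q
  have hQ1 : Qᵀ * Q = 1 := by
    rw [← hQs, hQ]; exact Unitary.coe_star_mul_self hX.eigenvectorUnitary
  rw [hQs] at hsp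
  refine ⟨Qᵀ * V, hX.eigenvalues, ?_, ?_⟩
  · calc Qᵀ * V * A * (Qᵀ * V)ᵀ = Qᵀ * (V * A * Vᵀ) * Q := by
          simp only [transpose_mul, transpose_transpose, Matrix.mul_assoc]
      _ = 1 := by rw [hVA, Matrix.mul_one, hQ1]
  · calc Qᵀ * V * S * (Qᵀ * V)ᵀ = Qᵀ * (V * S * Vᵀ) * Q := by
          simp only [transpose_mul, transpose_transpose, Matrix.mul_assoc]
      _ = (Qᵀ * Q) * diagonal (RCLike.ofReal ∘ hX.eigenvalues) * (Qᵀ * Q) := by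
          conv_lhs => rw [hsp]
          simp only [Matrix.mul_assoc]
      _ = _ := by rw [hQ1, Matrix.one_mul, Matrix.mul_one]; rfl

/-- Simultaneous diagonalization of two positive definite matrices, with the expressions of the
inverse quadratic forms, log-determinants and of the Frobenius distance in the common basis. -/
lemma exists_simul_diag {A S : Matrix (Fin n) (Fin n) ℝ} (hA : A.PosDef) (hS : S.PosDef) :
    ∃ (W : Matrix (Fin n) (Fin n) ℝ) (μ : Fin n → ℝ), (∀ k, 0 < μ k) ∧
      (∀ k l, W k ⬝ᵥ (A *ᵥ W l) = if k = l then 1 else 0) ∧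
      (∀ k l, W k ⬝ᵥ (S *ᵥ W l) = if k = l then μ k else 0) ∧
      (∀ y : Fin n → ℝ, y ⬝ᵥ (A⁻¹ *ᵥ y) = ∑ k, (W k ⬝ᵥ y) ^ 2) ∧
      (∀ y : Fin n → ℝ, y ⬝ᵥ (S⁻¹ *ᵥ y) = ∑ k, (W k ⬝ᵥ y) ^ 2 / μ k) ∧
      Real.log S.det = Real.log A.det + ∑ k, Real.log (μ k) ∧
      (∀ M : ℝ, (∀ x : Fin n → ℝ, x ⬝ᵥ (A *ᵥ x) ≤ M * (x ⬝ᵥ x)) →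
        ∑ i, ∑ j, (S i j - A i j) ^ 2 ≤ M ^ 2 * ∑ k, (μ k - 1) ^ 2) := by
  obtain ⟨W, μ, hWA, hWS⟩ := exists_simul_diag_aux hA hS.1
  have hA0 := hA.det_pos
  have hS0 := hS.det_pos
  have hdet : W.det * A.det * W.det = 1 := by
    have := congrArg Matrix.det hWA
    simpa [Matrix.det_mul] using this
  have hdetS : W.det * S.det * W.det = ∏ k, μ k := by
    have := congrArg Matrix.det hWS
    simpa [Matrix.det_mul] using this
  have hW0 : W.det ≠ 0 := by rintro h; simp [h] at hdet
  have hWu : IsUnit W.det := hW0.isUnit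
  have hWtu : IsUnit (Wᵀ).det := by rwa [det_transpose]
  have hA1 : ∀ k l, W k ⬝ᵥ (A *ᵥ W l) = if k = l then 1 else 0 := by
    intro k l; rw [← mul_mul_transpose_apply, hWA, Matrix.one_apply]
  have hS1 : ∀ k l, W k ⬝ᵥ (S *ᵥ W l) = if k = l then μ k else 0 := by
    intro k l; rw [← mul_mul_transpose_apply, hWS, Matrix.diagonal_apply]
  have hμ : ∀ k, 0 < μ k := by
    intro k
    have h := hS1 k k
    rw [if_pos rfl] at h
    rw [← h]
    have hne : W k ≠ 0 := by
      intro h0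
      have := hA1 k k
      simp [h0] at this
    simpa using hS.dotProduct_mulVec_pos hne
  have hAV : A = W⁻¹ * (W⁻¹)ᵀ := by
    have : W⁻¹ * (W * A * Wᵀ) * (Wᵀ)⁻¹ = A := by
      calc _ = (W⁻¹ * W) * A * (Wᵀ * (Wᵀ)⁻¹) := by simp only [Matrix.mul_assoc]
        _ = A := by rw [nonsing_inv_mul _ hWu, mul_nonsing_inv _ hWtu]; simp
    rw [← this, hWA, transpose_nonsing_inv]; simp
  have hSV : S = W⁻¹ * diagonal μ * (W⁻¹)ᵀ := by
    have : W⁻¹ * (W * S * Wᵀ) * (Wᵀ)⁻¹ = S := by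
      calc _ = (W⁻¹ * W) * S * (Wᵀ * (Wᵀ)⁻¹) := by simp only [Matrix.mul_assoc]
        _ = S := by rw [nonsing_inv_mul _ hWu, mul_nonsing_inv _ hWtu]; simp
    rw [← hWS, transpose_nonsing_inv]; exact this.symm
  have hAi : A⁻¹ = Wᵀ * W := by
    refine Matrix.inv_eq_right_inv ?_
    rw [hAV, transpose_nonsing_inv]
    calc _ = W⁻¹ * ((Wᵀ)⁻¹ * Wᵀ) * W := by simp only [Matrix.mul_assoc]
      _ = 1 := by rw [nonsing_inv_mul _ hWtu, Matrix.mul_one, nonsing_inv_mul _ hWu]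
  have hSi : S⁻¹ = Wᵀ * diagonal (fun k => (μ k)⁻¹) * W := by
    refine Matrix.inv_eq_right_inv ?_
    rw [hSV, transpose_nonsing_inv]
    calc _ = W⁻¹ * (diagonal μ * ((Wᵀ)⁻¹ * Wᵀ) * diagonal (fun k => (μ k)⁻¹)) * W := by
          simp only [Matrix.mul_assoc]
      _ = 1 := by
          rw [nonsing_inv_mul _ hWtu, Matrix.mul_one, diagonal_mul_diagonal]
          simp [(hμ _).ne', nonsing_inv_mul _ hWu]
  refine ⟨W, μ, hμ, hA1, hS1, ?_, ?_, ?_, ?_⟩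
  · intro y
    rw [hAi, ← mulVec_mulVec, dotProduct_mulVec, vecMul_transpose]
    exact Finset.sum_congr rfl fun k _ => (sq _).symm
  · intro y
    rw [hSi, ← mulVec_mulVec, ← mulVec_mulVec, dotProduct_mulVec, vecMul_transpose]
    refine Finset.sum_congr rfl fun k _ => ?_
    rw [mulVec_diagonal]
    change (W k ⬝ᵥ y) * ((μ k)⁻¹ * (W k ⬝ᵥ y)) = _
    rw [div_eq_mul_inv]; ring
  · rw [← Real.log_prod (fun k _ => (hμ k).ne'), ← hdetS, ← Real.log_mul hA0.ne' (by positivity)]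
    congr 1
    calc S.det = S.det * (W.det * A.det * W.det) := by rw [hdet, mul_one]
      _ = _ := by ring
  · intro M hM
    have hd : S - A = W⁻¹ * diagonal (fun k => μ k - 1) * (W⁻¹)ᵀ := by
      conv_lhs => rw [hSV, hAV]
      rw [← Matrix.diagonal_sub, Matrix.mul_sub, Matrix.sub_mul, diagonal_one, Matrix.mul_one]
    have := frobenius_conj_le W⁻¹ A (fun k => μ k - 1) hAV hM
    rw [← hd] at this
    simpa using this
end

/-! ### Comparison of Gaussian likelihoods -/

section
variable {n : ℕ}

/-- If `A'` is within `δ` of `A` as a quadratic form, the negative log-likelihood at `A'` is bounded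
below in terms of the one at `A`. -/
lemma perturb_lower {A A' : Matrix (Fin n) (Fin n) ℝ} (hA : A.PosDef) (hA' : A'.PosDef)
    {m δ t : ℝ} (hm : 0 < m) (hmA : ∀ x : Fin n → ℝ, m * (x ⬝ᵥ x) ≤ x ⬝ᵥ (A *ᵥ x))
    (hδ : ∀ x : Fin n → ℝ, |x ⬝ᵥ (A' *ᵥ x) - x ⬝ᵥ (A *ᵥ x)| ≤ δ * (x ⬝ᵥ x))
    (ht : t = δ / m) (ht0 : 0 ≤ t) (ht2 : t ≤ 1 / 2) (y : Fin n → ℝ) :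
    Real.log A.det + (1 - t) * (y ⬝ᵥ (A⁻¹ *ᵥ y)) - 2 * t * n
      ≤ Real.log A'.det + y ⬝ᵥ (A'⁻¹ *ᵥ y) := by
  obtain ⟨W, ν, hν, hWA, hWA', hAi, hA'i, hdet, -⟩ := exists_simul_diag hA hA'
  have hν1 : ∀ k, |ν k - 1| ≤ t := by
    intro k
    have h1 := hWA k k
    have h2 := hWA' k k
    rw [if_pos rfl] at h1 h2
    have h3 := hδ (W k)
    have h4 := hmA (W k)
    rw [h1] at h4
    rw [h1, h2] at h3
    have hδ' : δ = t * m := by rw [ht]; field_simp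
    calc |ν k - 1| ≤ δ * (W k ⬝ᵥ W k) := h3
      _ = t * (m * (W k ⬝ᵥ W k)) := by rw [hδ']; ring
      _ ≤ t * 1 := by gcongr
      _ = t := mul_one t
  rw [hAi, hA'i, hdet]
  have hk : ∀ k, (1 - t) * (W k ⬝ᵥ y) ^ 2 - 2 * t ≤ Real.log (ν k) + (W k ⬝ᵥ y) ^ 2 / ν k := by
    intro k
    have hb := abs_le.1 (hν1 k)
    have hlog : -(2 * t) ≤ Real.log (ν k) := by
      refine le_trans ?_ (Real.one_sub_inv_le_log_of_pos (hν k))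
      have : (ν k)⁻¹ ≤ 1 + 2 * t := by
        rw [inv_le_iff_one_le_mul₀ (hν k)]
        nlinarith
      linarith
    have hq : (1 - t) * (W k ⬝ᵥ y) ^ 2 ≤ (W k ⬝ᵥ y) ^ 2 / ν k := by
      rw [le_div_iff₀ (hν k)]
      have : (1 - t) * ν k ≤ 1 := by nlinarith
      nlinarith [sq_nonneg (W k ⬝ᵥ y)]
    linarith
  have hs := Finset.sum_le_sum fun k (_ : k ∈ Finset.univ) => hk k
  rw [Finset.sum_sub_distrib, ← Finset.mul_sum, Finset.sum_add_distrib] at hs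
  simp only [Finset.sum_const, Finset.card_univ, Fintype.card_fin, nsmul_eq_mul] at hs
  linarith

/-- Quadratic lower bound for the Kullback–Leibler integrand `x - 1 - log x`. -/
lemma sq_le_sub_one_sub_log {x B : ℝ} (hx : 0 < x) (hxB : x ≤ B) :
    (x - 1) ^ 2 / (2 * (B + 1)) ≤ x - 1 - Real.log x := by
  have hs := Real.sqrt_pos.2 hx
  have hsq := Real.sq_sqrt hx.le
  set s := Real.sqrt x
  have h1 : Real.log x ≤ 2 * (s - 1) := by
    rw [← hsq, Real.log_pow]
    have := Real.log_le_sub_one_of_pos hs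
    push_cast; linarith
  have hB : 0 < B := hx.trans_le hxB
  rw [div_le_iff₀ (by positivity)]
  have h2 : (s - 1) ^ 2 ≤ x - 1 - Real.log x := by nlinarith
  have h3 : (x - 1) ^ 2 = (s - 1) ^ 2 * (s + 1) ^ 2 := by rw [← hsq]; ring
  have h4 : (s + 1) ^ 2 ≤ 2 * (B + 1) := by nlinarith [sq_nonneg (s - 1)]
  rw [h3]
  exact mul_le_mul h2 h4 (by positivity) ((sq_nonneg _).trans h2)

/-- If the true covariance `S` is at squared Frobenius distance at least `η n` from `A`, the
negative log-likelihood at `A` (with a slack `t`) exceeds that at `S` except with probability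
`O(1/n)`, uniformly in the spectral bounds `m`, `M`. -/
lemma prob_lower {Ω : Type*} [MeasurableSpace Ω] {P : Measure Ω} [IsProbabilityMeasure P]
    {A S : Matrix (Fin n) (Fin n) ℝ} (hA : A.PosDef) (hS : S.PosDef)
    {y : Ω → Fin n → ℝ} (hy : Measurable y)
    (hG : ∀ a : Fin n → ℝ, P.map (fun ω => a ⬝ᵥ y ω)
      = gaussianReal 0 (a ⬝ᵥ (S *ᵥ a)).toNNReal)
    {m M η t : ℝ} (hm : 0 < m) (hM : 0 < M) (hη : 0 < η) (hn : 0 < n)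
    (hmA : ∀ x : Fin n → ℝ, m * (x ⬝ᵥ x) ≤ x ⬝ᵥ (A *ᵥ x))
    (hMA : ∀ x : Fin n → ℝ, x ⬝ᵥ (A *ᵥ x) ≤ M * (x ⬝ᵥ x))
    (hMS : ∀ x : Fin n → ℝ, x ⬝ᵥ (S *ᵥ x) ≤ M * (x ⬝ᵥ x))
    (hF : η * n ≤ ∑ i, ∑ j, (S i j - A i j) ^ 2)
    {B κ : ℝ} (hB : B = M / m) (hκ : κ = η / (2 * (B + 1) * M ^ 2))
    (ht0 : 0 ≤ t) (ht1 : t ≤ 1) (ht : t * (B + 2) ≤ κ / 2) :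
    P {ω | Real.log A.det + (1 - t) * (y ω ⬝ᵥ (A⁻¹ *ᵥ y ω)) - 2 * t * n
        ≤ Real.log S.det + y ω ⬝ᵥ (S⁻¹ *ᵥ y ω)}
      ≤ ENNReal.ofReal (8 * (B + 1) ^ 2 / κ ^ 2 / n) := by
  obtain ⟨W, μ, hμ, hWA, hWS, hAi, hSi, hdet, hfro⟩ := exists_simul_diag hA hS
  have hB0 : 0 < B := by rw [hB]; positivity
  have hκ0 : 0 < κ := by rw [hκ]; positivity
  have hn' : (0 : ℝ) < n := by exact_mod_cast hn
  have hμB : ∀ k, μ k ≤ B := by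
    intro k
    have h1 := hWA k k
    have h2 := hWS k k
    rw [if_pos rfl] at h1 h2
    have h3 := hMS (W k)
    have h4 := hmA (W k)
    rw [h1] at h4
    rw [h2] at h3
    rw [hB, le_div_iff₀ hm]
    nlinarith
  have hz : ∀ k, Measurable fun ω => W k ⬝ᵥ y ω := by
    intro k
    simp only [dotProduct]
    fun_prop
  -- the mean gap is a Kullback-Leibler divergence, up to the slack `t`
  have hmean : n * (κ / 2) ≤ ∑ k, (-Real.log (μ k) + (1 - t) * μ k - 1 - 2 * t) := by
    have h1 : ∀ k, (μ k - 1) ^ 2 / (2 * (B + 1)) - t * (B + 2)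
        ≤ -Real.log (μ k) + (1 - t) * μ k - 1 - 2 * t := by
      intro k
      have := sq_le_sub_one_sub_log (hμ k) (hμB k)
      nlinarith [mul_le_mul_of_nonneg_left (hμB k) ht0]
    have hs := Finset.sum_le_sum fun k (_ : k ∈ Finset.univ) => h1 k
    rw [Finset.sum_sub_distrib, ← Finset.sum_div] at hs
    simp only [Finset.sum_const, Finset.card_univ, Fintype.card_fin, nsmul_eq_mul] at hs
    refine le_trans ?_ hs
    have h2 : n * κ ≤ (∑ k, (μ k - 1) ^ 2) / (2 * (B + 1)) := by
      rw [le_div_iff₀ (by positivity), hκ]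
      have := hF.trans (hfro M hMA)
      rw [mul_comm (M ^ 2), ← div_le_iff₀ (by positivity)] at this
      refine le_trans (le_of_eq ?_) this
      field_simp
    nlinarith
  -- `W k ⬝ᵥ y` are the coordinates of `y` in the basis diagonalizing both `A` and `S`
  have hch := gaussian_chebyshev (P := P) (z := fun k ω => W k ⬝ᵥ y ω) hz (fun k => (hμ k).le)
    (fun k => by rw [hG, hWS, if_pos rfl])
    (fun k l hkl => by
      have := hG (W k + W l)
      simp only [add_dotProduct, mulVec_add, dotProduct_add, hWS, if_pos, if_neg hkl,
        if_neg (Ne.symm hkl)] at this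
      simpa using this)
    (fun k l hkl => by
      have := hG (W k - W l)
      simp only [sub_dotProduct, mulVec_sub, dotProduct_sub, hWS, if_pos, if_neg hkl,
        if_neg (Ne.symm hkl)] at this
      simpa using this)
    (b := fun k => (1 - t) - 1 / μ k) (B := B + 1)
    (fun k => by
      have h0 := hμ k
      have hb := hμB k
      have : ((1 - t) - 1 / μ k) * μ k = (1 - t) * μ k - 1 := by field_simp
      rw [this, abs_le]
      constructor <;> nlinarith)
    (h := n * (κ / 2)) (by positivity)
  refine (measure_mono ?_).trans (hch.trans (le_of_eq ?_))
  · intro ω hω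
    simp only [Set.mem_ofPred_eq] at hω ⊢
    rw [hAi, hSi, hdet] at hω
    have hsplit : ∑ k, ((1 - t) - 1 / μ k) * ((W k ⬝ᵥ y ω) ^ 2 - μ k)
        = (1 - t) * ∑ k, (W k ⬝ᵥ y ω) ^ 2 - ∑ k, (W k ⬝ᵥ y ω) ^ 2 / μ k
          - ∑ k, Real.log (μ k) - 2 * t * n
          - ∑ k, (-Real.log (μ k) + (1 - t) * μ k - 1 - 2 * t) := by
      have hc : 2 * t * n = ∑ _k : Fin n, 2 * t := by simp; ring
      rw [hc, Finset.mul_sum, ← Finset.sum_sub_distrib, ← Finset.sum_sub_distrib,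
        ← Finset.sum_sub_distrib, ← Finset.sum_sub_distrib]
      refine Finset.sum_congr rfl fun k _ => ?_
      have h0 := (hμ k).ne'
      field_simp
      ring
    rw [le_abs]
    right
    rw [hsplit]
    linarith
  · congr 1
    rw [Fintype.card_fin]
    field_simp
    ring
end

/-! ### The distances are squared Euclidean; Schoenberg's theorem -/

namespace SInf

/-- `d` is the square of an `ℓ²` distance: `d s t = ∑ₖ (fₖ s - fₖ t)²` for some family of real
functions `fₖ`. -/
def SqEmb (d : SInf → SInf → ℝ) : Prop :=
  ∃ (ι : Type) (f : ι → SInf → ℝ), ∀ s t, HasSum (fun k => (f k s - f k t) ^ 2) (d s t)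

/-- Two finitely supported permutations both preserve some `{0, …, N - 1}` and fix its
complement pointwise. -/
lemma exists_bound (s s' : SInf) : ∃ N : ℕ, (∀ i, N ≤ i → s.1 i = i ∧ s'.1 i = i) ∧
    ∀ i, i < N → s.1 i < N ∧ s'.1 i < N := by
  have h : ∀ s : SInf, ∃ N : ℕ, ∀ i, N ≤ i → s.1 i = i := by
    intro s
    obtain ⟨N, hN⟩ := s.2.bddAbove
    refine ⟨N + 1, fun i hi => ?_⟩
    by_contra hne
    have : i ≤ N := hN hne
    omega
  have hlt : ∀ (s : SInf) (N : ℕ), (∀ i, N ≤ i → s.1 i = i) → ∀ i, i < N → s.1 i < N := by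
    intro s N hN i hi
    by_contra hge
    have := s.1.injective (hN (s.1 i) (by omega))
    omega
  obtain ⟨N, hN⟩ := h s
  obtain ⟨N', hN'⟩ := h s'
  have e1 : ∀ i, max N N' ≤ i → s.1 i = i := fun i hi => hN i ((le_max_left _ _).trans hi)
  have e2 : ∀ i, max N N' ≤ i → s'.1 i = i := fun i hi => hN' i ((le_max_right _ _).trans hi)
  exact ⟨max N N', fun i hi => ⟨e1 i hi, e2 i hi⟩, fun i hi => ⟨hlt s _ e1 i hi, hlt s' _ e2 i hi⟩⟩

lemma sqEmb_dS2 : SqEmb dS2 := by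
  refine ⟨ℕ, fun i s => (s.1 i : ℝ), fun s s' => ?_⟩
  obtain ⟨N, hN, -⟩ := exists_bound s s'
  refine Summable.hasSum (summable_of_ne_finset_zero (s := Finset.range N) fun i hi => ?_)
  rw [Finset.mem_range, not_lt] at hi
  beta_reduce
  rw [(hN i hi).1, (hN i hi).2]; simp

lemma sum_threshold {N a b : ℕ} (ha : a ≤ N) (hb : b ≤ N) :
    ∑ v ∈ Finset.range N, ((if v < a then (1 : ℝ) else 0) - (if v < b then 1 else 0)) ^ 2
      = |(a : ℝ) - b| := by
  wlog hab : a ≤ b generalizing a b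
  · rw [abs_sub_comm, ← this hb ha (by omega)]
    exact Finset.sum_congr rfl fun v _ => by ring
  have h1 : ∀ v, ((if v < a then (1 : ℝ) else 0) - (if v < b then 1 else 0)) ^ 2
      = if v ∈ Finset.Ico a b then 1 else 0 := by
    intro v
    simp only [Finset.mem_Ico]
    split_ifs <;> first | omega | norm_num
  simp_rw [h1]
  rw [Finset.sum_ite_mem, Finset.inter_eq_right.2 (fun v hv => by
    rw [Finset.mem_Ico] at hv; rw [Finset.mem_range]; omega)]
  simp only [Finset.sum_const, Nat.card_Ico, nsmul_eq_mul, mul_one]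
  rw [abs_sub_comm, abs_of_nonneg (by simpa using hab), Nat.cast_sub hab]

/-- Embedding by the indicators of `v < s i`, since `|a - b|` counts the thresholds `v` lying
between `a` and `b`. -/
lemma sqEmb_dFoot : SqEmb dFoot := by
  refine ⟨ℕ × ℕ, fun p s => if p.2 < s.1 p.1 then 1 else 0, fun s s' => ?_⟩
  obtain ⟨N, hN, hN'⟩ := exists_bound s s'
  have hd : dFoot s s' = ∑ p ∈ Finset.range N ×ˢ Finset.range N,
      ((if p.2 < s.1 p.1 then (1 : ℝ) else 0) - (if p.2 < s'.1 p.1 then 1 else 0)) ^ 2 := by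
    rw [dFoot, tsum_eq_sum (s := Finset.range N), Finset.sum_product]
    · refine Finset.sum_congr rfl fun i hi => ?_
      rw [Finset.mem_range] at hi
      exact (sum_threshold (hN' i hi).1.le (hN' i hi).2.le).symm
    · intro i hi
      rw [Finset.mem_range, not_lt] at hi
      rw [(hN i hi).1, (hN i hi).2]; simp
  rw [hd]
  refine hasSum_sum_of_ne_finset_zero fun p hp => ?_
  rw [Finset.mem_product, Finset.mem_range, Finset.mem_range] at hp
  beta_reduce
  by_cases h1 : p.1 < N
  · have := hN' p.1 h1
    rw [if_neg (by omega), if_neg (by omega)]; simp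
  · have := hN p.1 (by omega)
    rw [this.1, this.2]; simp

/-- Embedding by the indicators of `s i = v`, scaled by `√(1/2)` because each disagreement is seen
by two values `v`. -/
lemma sqEmb_dHam : SqEmb dHam := by
  refine ⟨ℕ × ℕ, fun p s => if s.1 p.1 = p.2 then Real.sqrt (1 / 2) else 0, fun s s' => ?_⟩
  obtain ⟨N, hN, hN'⟩ := exists_bound s s'
  have hsum : ∀ i, i < N → ∑ v ∈ Finset.range N,
      ((if s.1 i = v then Real.sqrt (1 / 2) else 0) - (if s'.1 i = v then Real.sqrt (1 / 2) else 0))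
        ^ 2 = if s.1 i ≠ s'.1 i then 1 else 0 := by
    intro i hi
    have h1 : ∀ v, ((if s.1 i = v then Real.sqrt (1 / 2) else 0)
          - (if s'.1 i = v then Real.sqrt (1 / 2) else 0)) ^ 2
        = (if s.1 i = v then (if s.1 i ≠ s'.1 i then 1 / 2 else 0) else 0)
          + (if s'.1 i = v then (if s.1 i ≠ s'.1 i then 1 / 2 else 0) else 0) := by
      intro v
      by_cases ha : s.1 i = v <;> by_cases hb : s'.1 i = v
      · simp [ha, hb]
      · have : v ≠ s'.1 i := fun h => hb h.symm
        simp [ha, hb, this]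
      · simp [ha, hb]
      · simp [ha, hb]
    simp_rw [h1]
    rw [Finset.sum_add_distrib, Finset.sum_ite_eq, Finset.sum_ite_eq,
      if_pos (Finset.mem_range.2 (hN' i hi).1), if_pos (Finset.mem_range.2 (hN' i hi).2)]
    split_ifs <;> norm_num
  have hset : {i : ℕ | s.1 i ≠ s'.1 i}
      = ((Finset.range N).filter fun i => s.1 i ≠ s'.1 i : Finset ℕ) := by
    ext i
    simp only [Set.mem_ofPred_eq, Finset.coe_filter, Finset.mem_range]
    refine ⟨fun h => ⟨?_, h⟩, fun h => h.2⟩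
    by_contra hi
    have := hN i (by omega)
    exact h (this.1.trans this.2.symm)
  have hd : dHam s s' = ∑ p ∈ Finset.range N ×ˢ Finset.range N,
      ((if s.1 p.1 = p.2 then Real.sqrt (1 / 2) else 0)
        - (if s'.1 p.1 = p.2 then Real.sqrt (1 / 2) else 0)) ^ 2 := by
    rw [dHam, hset, Set.ncard_coe_finset, Finset.sum_product,
      Finset.sum_congr rfl fun i hi => hsum i (Finset.mem_range.1 hi), Finset.card_filter]
    push_cast
    rfl
  rw [hd]
  refine hasSum_sum_of_ne_finset_zero fun p hp => ?_
  rw [Finset.mem_product, Finset.mem_range, Finset.mem_range] at hp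
  beta_reduce
  by_cases h1 : p.1 < N
  · have := hN' p.1 h1
    rw [if_neg (by omega), if_neg (by omega)]; simp
  · have := hN p.1 (by omega)
    rw [this.1, this.2]; simp

/-- Embedding by the indicators of `s i < s j` over pairs `i < j`. -/
lemma sqEmb_dKen : SqEmb dKen := by
  refine ⟨ℕ × ℕ, fun p s => if p.1 < p.2 ∧ s.1 p.1 < s.1 p.2 then 1 else 0, fun s s' => ?_⟩
  obtain ⟨N, hN, hN'⟩ := exists_bound s s'
  set I : Set (ℕ × ℕ) := {p : ℕ × ℕ | p.1 < p.2 ∧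
    ((s'.1 p.2 < s'.1 p.1 ∧ s.1 p.1 < s.1 p.2) ∨
      (s'.1 p.1 < s'.1 p.2 ∧ s.1 p.2 < s.1 p.1))} with hI
  have hsub : I ⊆ (Finset.range N ×ˢ Finset.range N : Finset (ℕ × ℕ)) := by
    rintro ⟨i, j⟩ ⟨hij, h⟩
    simp only at hij h
    have hj : j < N := by
      by_contra hj
      have e := hN j (by omega)
      rw [e.1, e.2] at h
      by_cases hi : i < N
      · have := hN' i hi; omega
      · have := hN i (by omega); omega
    simp only [Finset.coe_product, Set.mem_prod, Finset.coe_range, Set.mem_Iio]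
    omega
  have hfin : I.Finite := (Finset.finite_toSet _).subset hsub
  have hterm : ∀ p : ℕ × ℕ, ((if p.1 < p.2 ∧ s.1 p.1 < s.1 p.2 then (1 : ℝ) else 0)
      - (if p.1 < p.2 ∧ s'.1 p.1 < s'.1 p.2 then 1 else 0)) ^ 2
        = if p ∈ hfin.toFinset then 1 else 0 := by
    rintro ⟨i, j⟩
    simp only [Set.Finite.mem_toFinset]
    by_cases hij : i < j
    · have h1 : s.1 i ≠ s.1 j := fun h => hij.ne (s.1.injective h)
      have h2 : s'.1 i ≠ s'.1 j := fun h => hij.ne (s'.1.injective h)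
      have hmem : ((i, j) ∈ I) ↔ ((s'.1 j < s'.1 i ∧ s.1 i < s.1 j) ∨
          (s'.1 i < s'.1 j ∧ s.1 j < s.1 i)) := ⟨fun h => h.2, fun h => ⟨hij, h⟩⟩
      rw [if_congr hmem rfl rfl]
      simp only [hij, true_and]
      split_ifs <;> first | omega | norm_num
    · have hmem : (i, j) ∉ I := fun h => hij h.1
      simp [hij, hmem]
  have hd : dKen s s' = ∑ p ∈ hfin.toFinset, (if p ∈ hfin.toFinset then (1 : ℝ) else 0) := by
    rw [dKen, ← hI, Set.ncard_eq_toFinset_card I hfin]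
    simp only [Finset.sum_ite_mem, Finset.inter_self]
    simp
  rw [hd]
  simp_rw [hterm]
  exact hasSum_sum_of_ne_finset_zero fun p hp => if_neg hp

namespace SqEmb
variable {d : SInf → SInf → ℝ}

lemma nonneg (hd : SqEmb d) (s s' : SInf) : 0 ≤ d s s' := by
  obtain ⟨ι, f, hf⟩ := hd
  exact (hf s s').nonneg fun k => sq_nonneg _

lemma symm (hd : SqEmb d) (s s' : SInf) : d s s' = d s' s := by
  obtain ⟨ι, f, hf⟩ := hd
  have h := hf s' s
  simp_rw [fun k => show (f k s' - f k s) ^ 2 = (f k s - f k s') ^ 2 by ring] at h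
  exact (hf s s').unique h

lemma self_eq_zero (hd : SqEmb d) (s : SInf) : d s s = 0 := by
  obtain ⟨ι, f, hf⟩ := hd
  have h := hf s s
  simp only [sub_self, ne_eq, OfNat.ofNat_ne_zero, not_false_eq_true, zero_pow] at h
  exact h.unique hasSum_zero

/-- Squared distances satisfy the triangle inequality up to a factor two. -/
lemma triangle (hd : SqEmb d) (s₁ s₂ s₃ : SInf) : d s₁ s₃ ≤ 2 * d s₁ s₂ + 2 * d s₂ s₃ := by
  obtain ⟨ι, f, hf⟩ := hd
  refine hasSum_le (fun k => ?_) (hf s₁ s₃) (((hf s₁ s₂).mul_left 2).add ((hf s₂ s₃).mul_left 2))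
  nlinarith [sq_nonneg ((f k s₁ - f k s₂) - (f k s₂ - f k s₃))]

end SqEmb

end SInf

/-- The one-dimensional Gaussian kernel is positive semidefinite (expand `exp (2 a x y)`). -/
lemma posSemidef_gauss_one {n : ℕ} {a : ℝ} (ha : 0 ≤ a) (x : Fin n → ℝ) :
    (Matrix.of fun i j : Fin n => Real.exp (-a * (x i - x j) ^ 2)).PosSemidef := by
  refine Matrix.PosSemidef.of_dotProduct_mulVec_nonneg ?_ fun c => ?_
  · ext i j
    simp only [conjTranspose_apply, of_apply, star_trivial]
    congr 1; ring
  set w : Fin n → ℝ := fun i => c i * Real.exp (-a * x i ^ 2) with hw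
  have hs : ∀ i j, HasSum (fun k : ℕ => (w i * w j) * ((2 * a * (x i * x j)) ^ k / k.factorial))
      ((w i * w j) * Real.exp (2 * a * (x i * x j))) := by
    intro i j
    have h := (NormedSpace.expSeries_div_hasSum_exp (2 * a * (x i * x j))).mul_left (w i * w j)
    rwa [← Real.exp_eq_exp_ℝ] at h
  have hS := hasSum_sum (s := Finset.univ) fun i _ =>
    hasSum_sum (s := Finset.univ) fun j _ => hs i j
  have hq : star c ⬝ᵥ (Matrix.of fun i j : Fin n => Real.exp (-a * (x i - x j) ^ 2)) *ᵥ c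
      = ∑ i, ∑ j, (w i * w j) * Real.exp (2 * a * (x i * x j)) := by
    simp only [dotProduct, mulVec, Finset.mul_sum, of_apply, star_trivial]
    refine Finset.sum_congr rfl fun i _ => Finset.sum_congr rfl fun j _ => ?_
    have : Real.exp (-a * (x i - x j) ^ 2) = Real.exp (-a * x i ^ 2) * Real.exp (-a * x j ^ 2)
        * Real.exp (2 * a * (x i * x j)) := by
      rw [← Real.exp_add, ← Real.exp_add]; congr 1; ring
    rw [this, hw]; ring
  rw [hq]
  refine hS.nonneg fun k => ?_
  have : ∑ i, ∑ j, (w i * w j) * ((2 * a * (x i * x j)) ^ k / k.factorial)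
      = (2 * a) ^ k / k.factorial * (∑ i, w i * x i ^ k) ^ 2 := by
    rw [sq, Finset.sum_mul_sum, Finset.mul_sum]
    simp_rw [Finset.mul_sum]
    refine Finset.sum_congr rfl fun i _ => Finset.sum_congr rfl fun j _ => ?_
    rw [mul_pow, mul_pow (x i)]; ring
  rw [this]
  positivity

/-- Schoenberg's theorem: `exp (-a d)` is positive semidefinite when `d` is a squared distance. It
is a limit of Hadamard products of one-dimensional Gaussian kernels. -/
lemma SInf.SqEmb.exp_nonneg {d : SInf → SInf → ℝ} (hd : SInf.SqEmb d) {n : ℕ} {a : ℝ} (ha : 0 ≤ a)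
    (σ : Fin n → SInf) (c : Fin n → ℝ) :
    0 ≤ ∑ i, ∑ j, c i * (Real.exp (-a * d (σ i) (σ j)) * c j) := by
  obtain ⟨ι, f, hf⟩ := hd
  have hF : ∀ F : Finset ι, (Matrix.of fun i j : Fin n =>
      Real.exp (-a * ∑ k ∈ F, (f k (σ i) - f k (σ j)) ^ 2)).PosSemidef := by
    intro F
    induction F using Finset.induction_on with
    | empty =>
      have := posSemidef_gauss_one ha (fun _ : Fin n => (0 : ℝ))
      simpa using this
    | insert k F hk ih =>
      have := (posSemidef_gauss_one ha (fun i => f k (σ i))).hadamard ih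
      have he : (Matrix.of fun i j : Fin n =>
          Real.exp (-a * ∑ k ∈ insert k F, (f k (σ i) - f k (σ j)) ^ 2))
          = (Matrix.of fun i j : Fin n => Real.exp (-a * (f k (σ i) - f k (σ j)) ^ 2)) ⊙
            (Matrix.of fun i j : Fin n =>
              Real.exp (-a * ∑ k ∈ F, (f k (σ i) - f k (σ j)) ^ 2)) := by
        ext i j
        simp only [of_apply, Matrix.hadamard_apply]
        rw [Finset.sum_insert hk, mul_add, Real.exp_add]
      rw [he]
      exact this
  have hlim : Filter.Tendsto (fun F : Finset ι => ∑ i, ∑ j, c i *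
      (Real.exp (-a * ∑ k ∈ F, (f k (σ i) - f k (σ j)) ^ 2) * c j)) Filter.atTop
      (nhds (∑ i, ∑ j, c i * (Real.exp (-a * d (σ i) (σ j)) * c j))) := by
    refine tendsto_finsetSum _ fun i _ => tendsto_finsetSum _ fun j _ => ?_
    have h : Filter.Tendsto (fun F : Finset ι => ∑ k ∈ F, (f k (σ i) - f k (σ j)) ^ 2)
      Filter.atTop (nhds (d (σ i) (σ j))) := hf (σ i) (σ j)
    exact (((Real.continuous_exp.tendsto _).comp (h.const_mul (-a))).mul_const (c j)).const_mul (c i)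
  refine ge_of_tendsto' hlim fun F => ?_
  have := (hF F).dotProduct_mulVec_nonneg c
  simpa only [dotProduct, mulVec, Finset.mul_sum, of_apply, star_trivial] using this

/-! ### Uniform bounds on the covariance matrices -/

/-- Schur test: a matrix whose absolute row and column sums are at most `δ` has quadratic form
bounded by `δ`. -/
lemma schur_test {n : ℕ} {A : Matrix (Fin n) (Fin n) ℝ} {δ : ℝ}
    (hr : ∀ i, ∑ j, |A i j| ≤ δ) (hc : ∀ j, ∑ i, |A i j| ≤ δ) (x : Fin n → ℝ) :
    |x ⬝ᵥ (A *ᵥ x)| ≤ δ * (x ⬝ᵥ x) := by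
  have h1 : |x ⬝ᵥ (A *ᵥ x)| ≤ ∑ i, ∑ j, (|A i j| * (x i ^ 2 / 2) + |A i j| * (x j ^ 2 / 2)) := by
    simp only [dotProduct, mulVec, Finset.mul_sum]
    refine (Finset.abs_sum_le_sum_abs _ _).trans (Finset.sum_le_sum fun i _ => ?_)
    refine (Finset.abs_sum_le_sum_abs _ _).trans (Finset.sum_le_sum fun j _ => ?_)
    rw [abs_mul, abs_mul, ← mul_add]
    have : |x i| * |x j| ≤ x i ^ 2 / 2 + x j ^ 2 / 2 := by
      nlinarith [sq_nonneg (|x i| - |x j|), sq_abs (x i), sq_abs (x j)]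
    nlinarith [mul_le_mul_of_nonneg_left this (abs_nonneg (A i j))]
  refine h1.trans ?_
  simp_rw [Finset.sum_add_distrib]
  rw [Finset.sum_comm (f := fun i j => |A i j| * (x j ^ 2 / 2))]
  simp_rw [← Finset.sum_mul]
  rw [← Finset.sum_add_distrib]
  simp only [dotProduct, Finset.mul_sum]
  refine Finset.sum_le_sum fun i _ => ?_
  have := mul_le_mul_of_nonneg_right (hr i) (by positivity : 0 ≤ x i ^ 2 / 2)
  have := mul_le_mul_of_nonneg_right (hc i) (by positivity : 0 ≤ x i ^ 2 / 2)
  nlinarith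

/-- Comparison with `k ^ (-β N)` for an integer `N > 1 / β`. -/
lemma summable_exp_rpow {a β : ℝ} (ha : 0 < a) (hβ : 0 < β) :
    Summable fun k : ℕ => Real.exp (-a * (k : ℝ) ^ β) := by
  obtain ⟨N, hN⟩ := exists_nat_gt (1 / β)
  have hN1 : 1 < β * N := by rwa [div_lt_iff₀' hβ] at hN
  have hs : Summable fun k : ℕ => (N.factorial / a ^ N) * ((k : ℝ) ^ (β * N))⁻¹ :=
    (Real.summable_nat_rpow_inv.2 hN1).mul_left _
  refine Summable.of_norm_bounded_eventually_nat hs ?_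
  filter_upwards [Filter.eventually_gt_atTop 0] with k hk
  have hk' : (0 : ℝ) < k := by exact_mod_cast hk
  have hp : 0 < (k : ℝ) ^ β := Real.rpow_pos_of_pos hk' β
  rw [Real.norm_eq_abs, abs_of_pos (Real.exp_pos _), neg_mul, Real.exp_neg]
  have h := Real.pow_div_factorial_le_exp (a * (k : ℝ) ^ β) (by positivity) N
  rw [Real.rpow_mul hk'.le, Real.rpow_natCast]
  have hpos : 0 < (a * (k : ℝ) ^ β) ^ N / N.factorial := by positivity
  refine (inv_anti₀ hpos h).trans (le_of_eq ?_)
  rw [mul_pow]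
  field_simp

/-- Row sums of `exp (-a |i - j| ^ β)` are bounded uniformly in the size of the matrix. -/
lemma exists_rowsum_bound {a β : ℝ} (ha : 0 < a) (hβ : 0 < β) :
    ∃ T : ℝ, 0 ≤ T ∧ ∀ (n : ℕ) (i : Fin n),
      ∑ j : Fin n, Real.exp (-a * |((i : ℕ) : ℝ) - ((j : ℕ) : ℝ)| ^ β) ≤ T := by
  have hs := summable_exp_rpow ha hβ
  have hz : Summable fun z : ℤ => Real.exp (-a * |(z : ℝ)| ^ β) := by
    refine Summable.of_nat_of_neg ?_ ?_
    · simpa using hs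
    · simpa using hs
  refine ⟨∑' z : ℤ, Real.exp (-a * |(z : ℝ)| ^ β), tsum_nonneg fun _ => (Real.exp_pos _).le,
    fun n i => ?_⟩
  have hinj : Function.Injective fun j : Fin n => ((i : ℕ) : ℤ) - ((j : ℕ) : ℤ) := by
    intro j j' h
    simp only at h
    apply Fin.ext
    omega
  have h := hz.sum_le_tsum (Finset.univ.map ⟨_, hinj⟩) fun _ _ => (Real.exp_pos _).le
  rw [Finset.sum_map] at h
  simpa using h

section Bounds

variable {d : SInf → SInf → ℝ} {σ : ℕ → SInf}

lemma one_le_dist {β : ℝ} (hβ : 0 < β)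
    (h1 : ∀ i j : ℕ, |(i : ℝ) - (j : ℝ)| ^ β ≤ d (σ i) (σ j)) {i j : ℕ} (hij : i ≠ j) :
    1 ≤ d (σ i) (σ j) := by
  refine le_trans (Real.one_le_rpow ?_ hβ.le) (h1 i j)
  have : (1 : ℤ) ≤ |(i : ℤ) - j| := Int.one_le_abs (by omega)
  exact_mod_cast this

lemma sigma_injective (hd : SInf.SqEmb d) {β : ℝ} (hβ : 0 < β)
    (h1 : ∀ i j : ℕ, |(i : ℝ) - (j : ℝ)| ^ β ≤ d (σ i) (σ j)) : Function.Injective σ := by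
  intro i j h
  by_contra hij
  have := one_le_dist hβ h1 hij
  rw [h, hd.self_eq_zero] at this
  linarith

/-- For injective `σ` the nugget term only acts on the diagonal. -/
lemma Kp_eq (hinj : Function.Injective σ) (θ : Fin 3 → ℝ) (i j : ℕ) :
    SInf.Kp d θ (σ i) (σ j)
      = θ 1 * Real.exp (-(θ 0) * d (σ i) (σ j)) + if i = j then θ 2 else 0 := by
  rw [SInf.Kp]
  by_cases h : i = j
  · simp [h]
  · rw [if_neg h, if_neg fun h' => h (hinj h')]

lemma Rmat_quad (hinj : Function.Injective σ) (θ : Fin 3 → ℝ) (n : ℕ) (x : Fin n → ℝ) :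
    x ⬝ᵥ (Rmat d σ θ n *ᵥ x)
      = θ 1 * ∑ i, ∑ j, x i * (Real.exp (-(θ 0) * d (σ i.1) (σ j.1)) * x j)
        + θ 2 * (x ⬝ᵥ x) := by
  simp only [dotProduct, mulVec, Rmat, of_apply, Finset.mul_sum]
  rw [← Finset.sum_add_distrib]
  refine Finset.sum_congr rfl fun i _ => ?_
  have : θ 2 * (x i * x i) = ∑ j : Fin n, if i = j then θ 2 * (x i * x j) else 0 := by
    simp
  rw [this, ← Finset.sum_add_distrib]
  refine Finset.sum_congr rfl fun j _ => ?_
  rw [Kp_eq hinj]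
  by_cases h : i = j
  · simp only [h, if_true]; ring
  · rw [if_neg h, if_neg fun h' => h (Fin.ext h')]; ring

lemma Rmat_lower (hd : SInf.SqEmb d) (hinj : Function.Injective σ) {θ : Fin 3 → ℝ}
    (h0 : 0 ≤ θ 0) (h1 : 0 ≤ θ 1) (n : ℕ) (x : Fin n → ℝ) :
    θ 2 * (x ⬝ᵥ x) ≤ x ⬝ᵥ (Rmat d σ θ n *ᵥ x) := by
  rw [Rmat_quad hinj]
  have := mul_nonneg h1 (hd.exp_nonneg h0 (fun i : Fin n => σ i.1) x)
  linarith

lemma Rmat_symm (hd : SInf.SqEmb d) (θ : Fin 3 → ℝ) (n : ℕ) (i j : Fin n) :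
    Rmat d σ θ n i j = Rmat d σ θ n j i := by
  simp only [Rmat, of_apply, SInf.Kp]
  rw [hd.symm]
  simp only [eq_comm]

lemma Rmat_posDef (hd : SInf.SqEmb d) (hinj : Function.Injective σ) {θ : Fin 3 → ℝ}
    (h0 : 0 ≤ θ 0) (h1 : 0 ≤ θ 1) (h2 : 0 < θ 2) (n : ℕ) : (Rmat d σ θ n).PosDef := by
  refine Matrix.PosDef.of_dotProduct_mulVec_pos ?_ fun x hx => ?_
  · ext i j
    simp only [conjTranspose_apply, star_trivial]
    exact Rmat_symm hd θ n j i
  · rw [star_trivial]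
    refine lt_of_lt_of_le (mul_pos h2 ?_) (Rmat_lower hd hinj h0 h1 n x)
    have : 0 ≤ x ⬝ᵥ x := by
      simp only [dotProduct]
      exact Finset.sum_nonneg fun i _ => mul_self_nonneg _
    exact lt_of_le_of_ne this fun h => hx (dotProduct_self_eq_zero.1 h.symm)

lemma exp_dist_rowsum {a β T : ℝ} (ha : 0 < a)
    (h1 : ∀ i j : ℕ, |(i : ℝ) - (j : ℝ)| ^ β ≤ d (σ i) (σ j))
    (hT : ∀ (n : ℕ) (i : Fin n),
      ∑ j : Fin n, Real.exp (-a * |((i : ℕ) : ℝ) - ((j : ℕ) : ℝ)| ^ β) ≤ T)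
    (n : ℕ) (i : Fin n) : ∑ j : Fin n, Real.exp (-a * d (σ i) (σ j)) ≤ T := by
  refine le_trans (Finset.sum_le_sum fun j _ => ?_) (hT n i)
  refine Real.exp_le_exp.2 ?_
  have := mul_le_mul_of_nonneg_left (h1 i j) ha.le
  linarith

/-- The factor `D` coming from the derivative in `a` is absorbed by half of the exponential
decay. -/
lemma abs_exp_sub_exp_le {a₀ a a' D : ℝ} (h0 : 0 < a₀) (ha : a₀ ≤ a) (ha' : a₀ ≤ a')
    (hD : 0 ≤ D) :
    |Real.exp (-a * D) - Real.exp (-a' * D)| ≤ |a - a'| * (2 / a₀) * Real.exp (-(a₀ / 2) * D) := by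
  wlog hle : a ≤ a' generalizing a a'
  · rw [abs_sub_comm, abs_sub_comm a]
    exact this ha' ha (not_le.1 hle).le
  have e1 : Real.exp (-a' * D) ≤ Real.exp (-a * D) :=
    Real.exp_le_exp.2 (by nlinarith)
  rw [abs_of_nonneg (sub_nonneg.2 e1), abs_sub_comm, abs_of_nonneg (sub_nonneg.2 hle)]
  have e2 : Real.exp (-a' * D) = Real.exp (-a * D) * Real.exp (-((a' - a) * D)) := by
    rw [← Real.exp_add]; congr 1; ring
  have e3 : 1 - Real.exp (-((a' - a) * D)) ≤ (a' - a) * D := by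
    have := Real.add_one_le_exp (-((a' - a) * D)); linarith
  have e4 : Real.exp (-a * D) ≤ Real.exp (-(a₀ / 2) * D) * Real.exp (-(a₀ / 2 * D)) := by
    rw [← Real.exp_add]
    exact Real.exp_le_exp.2 (by nlinarith)
  have e5 : D * Real.exp (-(a₀ / 2 * D)) ≤ 2 / a₀ := by
    rw [Real.exp_neg, ← div_eq_mul_inv, div_le_div_iff₀ (Real.exp_pos _) h0]
    have := Real.add_one_le_exp (a₀ / 2 * D)
    linarith
  calc Real.exp (-a * D) - Real.exp (-a' * D)
      = Real.exp (-a * D) * (1 - Real.exp (-((a' - a) * D))) := by rw [e2]; ring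
    _ ≤ Real.exp (-a * D) * ((a' - a) * D) :=
        mul_le_mul_of_nonneg_left e3 (Real.exp_pos _).le
    _ ≤ (Real.exp (-(a₀ / 2) * D) * Real.exp (-(a₀ / 2 * D))) * ((a' - a) * D) :=
        mul_le_mul_of_nonneg_right e4 (mul_nonneg (sub_nonneg.2 hle) hD)
    _ = (a' - a) * Real.exp (-(a₀ / 2) * D) * (D * Real.exp (-(a₀ / 2 * D))) := by ring
    _ ≤ (a' - a) * Real.exp (-(a₀ / 2) * D) * (2 / a₀) :=
        mul_le_mul_of_nonneg_left e5 (mul_nonneg (sub_nonneg.2 hle) (Real.exp_pos _).le)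
    _ = _ := by ring

lemma Kp_sub_le (hd : SInf.SqEmb d) (hinj : Function.Injective σ) {θ θ' : Fin 3 → ℝ} {a₀ b : ℝ}
    (h0 : 0 < a₀) (ha : a₀ ≤ θ 0) (ha' : a₀ ≤ θ' 0) (h1 : 0 ≤ θ 1) (hb : θ 1 ≤ b) (i j : ℕ) :
    |SInf.Kp d θ (σ i) (σ j) - SInf.Kp d θ' (σ i) (σ j)|
      ≤ (b * |θ 0 - θ' 0| * (2 / a₀) + |θ 1 - θ' 1| + |θ 2 - θ' 2|)
        * Real.exp (-(a₀ / 2) * d (σ i) (σ j)) := by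
  rw [Kp_eq hinj, Kp_eq hinj]
  have hD := hd.nonneg (σ i) (σ j)
  have hx := abs_exp_sub_exp_le h0 ha ha' hD
  set E := Real.exp (-(a₀ / 2) * d (σ i) (σ j)) with hE
  have hE0 : 0 < E := Real.exp_pos _
  have hE' : Real.exp (-(θ' 0) * d (σ i) (σ j)) ≤ E := Real.exp_le_exp.2 (by nlinarith)
  have t1 : |θ 1 * (Real.exp (-(θ 0) * d (σ i) (σ j)) - Real.exp (-(θ' 0) * d (σ i) (σ j)))|
      ≤ b * (|θ 0 - θ' 0| * (2 / a₀) * E) := by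
    rw [abs_mul, abs_of_nonneg h1]
    exact mul_le_mul hb hx (abs_nonneg _) (h1.trans hb)
  have t2 : |(θ 1 - θ' 1) * Real.exp (-(θ' 0) * d (σ i) (σ j))| ≤ |θ 1 - θ' 1| * E := by
    rw [abs_mul, abs_of_pos (Real.exp_pos _)]
    exact mul_le_mul_of_nonneg_left hE' (abs_nonneg _)
  have t3 : |(if i = j then θ 2 else 0) - (if i = j then θ' 2 else 0)| ≤ |θ 2 - θ' 2| * E := by
    by_cases h : i = j
    · rw [if_pos h, if_pos h]
      have : E = 1 := by rw [hE, h, hd.self_eq_zero]; simp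
      rw [this, mul_one]
    · rw [if_neg h, if_neg h]; simp; positivity
  have := abs_add_three
    (θ 1 * (Real.exp (-(θ 0) * d (σ i) (σ j)) - Real.exp (-(θ' 0) * d (σ i) (σ j))))
    ((θ 1 - θ' 1) * Real.exp (-(θ' 0) * d (σ i) (σ j)))
    ((if i = j then θ 2 else 0) - (if i = j then θ' 2 else 0))
  calc _ = |θ 1 * (Real.exp (-(θ 0) * d (σ i) (σ j)) - Real.exp (-(θ' 0) * d (σ i) (σ j)))
      + (θ 1 - θ' 1) * Real.exp (-(θ' 0) * d (σ i) (σ j))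
      + ((if i = j then θ 2 else 0) - (if i = j then θ' 2 else 0))| := by congr 1; ring
    _ ≤ _ := this
    _ ≤ _ := by linarith

/-- `θ ↦ R_θ` is continuous in operator norm, uniformly in the size of the matrix. -/
lemma Rmat_sub_quad (hd : SInf.SqEmb d) (hinj : Function.Injective σ) {θ θ' : Fin 3 → ℝ}
    {a₀ b β T : ℝ} (h0 : 0 < a₀) (ha : a₀ ≤ θ 0) (ha' : a₀ ≤ θ' 0) (h1 : 0 ≤ θ 1) (hb : θ 1 ≤ b)
    (hc : ∀ i j : ℕ, |(i : ℝ) - (j : ℝ)| ^ β ≤ d (σ i) (σ j))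
    (hT : ∀ (n : ℕ) (i : Fin n),
      ∑ j : Fin n, Real.exp (-(a₀ / 2) * |((i : ℕ) : ℝ) - ((j : ℕ) : ℝ)| ^ β) ≤ T)
    (n : ℕ) (x : Fin n → ℝ) :
    |x ⬝ᵥ (Rmat d σ θ n *ᵥ x) - x ⬝ᵥ (Rmat d σ θ' n *ᵥ x)|
      ≤ (b * |θ 0 - θ' 0| * (2 / a₀) + |θ 1 - θ' 1| + |θ 2 - θ' 2|) * T * (x ⬝ᵥ x) := by
  rw [← dotProduct_sub, ← Matrix.sub_mulVec]
  have hr : ∀ i, ∑ j, |(Rmat d σ θ n - Rmat d σ θ' n) i j|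
      ≤ (b * |θ 0 - θ' 0| * (2 / a₀) + |θ 1 - θ' 1| + |θ 2 - θ' 2|) * T := by
    intro i
    refine (Finset.sum_le_sum fun (j : Fin n) _ =>
      Kp_sub_le hd hinj h0 ha ha' h1 hb (i : ℕ) (j : ℕ)).trans ?_
    rw [← Finset.mul_sum]
    refine mul_le_mul_of_nonneg_left (exp_dist_rowsum (half_pos h0) hc hT n i) ?_
    have : 0 ≤ b := h1.trans hb
    positivity
  refine schur_test hr (fun j => ?_) x
  refine le_trans (le_of_eq (Finset.sum_congr rfl fun i _ => ?_)) (hr j)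
  rw [Matrix.sub_apply, Matrix.sub_apply, Rmat_symm hd θ, Rmat_symm hd θ']

lemma Rmat_upper (hd : SInf.SqEmb d) (hinj : Function.Injective σ) {θ : Fin 3 → ℝ}
    {a₀ b b₂ β T : ℝ} (h0 : 0 < a₀) (ha : a₀ ≤ θ 0) (h1 : 0 ≤ θ 1) (hb : θ 1 ≤ b) (hb₂ : θ 2 ≤ b₂)
    (hT0 : 0 ≤ T)
    (hc : ∀ i j : ℕ, |(i : ℝ) - (j : ℝ)| ^ β ≤ d (σ i) (σ j))
    (hT : ∀ (n : ℕ) (i : Fin n),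
      ∑ j : Fin n, Real.exp (-(a₀ / 2) * |((i : ℕ) : ℝ) - ((j : ℕ) : ℝ)| ^ β) ≤ T)
    (n : ℕ) (x : Fin n → ℝ) :
    x ⬝ᵥ (Rmat d σ θ n *ᵥ x) ≤ (b * T + b₂) * (x ⬝ᵥ x) := by
  rw [Rmat_quad hinj]
  have hx : 0 ≤ x ⬝ᵥ x := by
    simp only [dotProduct]
    exact Finset.sum_nonneg fun i _ => mul_self_nonneg _
  set A : Matrix (Fin n) (Fin n) ℝ :=
    Matrix.of fun i j : Fin n => Real.exp (-(θ 0) * d (σ i.1) (σ j.1)) with hA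
  have hr : ∀ i, ∑ j, |A i j| ≤ T := by
    intro i
    refine le_trans (Finset.sum_le_sum fun j _ => ?_)
      (exp_dist_rowsum (half_pos h0) hc hT n i)
    rw [hA, of_apply, abs_of_pos (Real.exp_pos _)]
    have hD := hd.nonneg (σ i.1) (σ j.1)
    exact Real.exp_le_exp.2 (by nlinarith)
  have hs := schur_test hr (fun j => by
    refine le_trans (le_of_eq (Finset.sum_congr rfl fun i _ => ?_)) (hr j)
    rw [hA, of_apply, of_apply, hd.symm]) x
  have he : x ⬝ᵥ (A *ᵥ x) = ∑ i, ∑ j, x i * (Real.exp (-(θ 0) * d (σ i.1) (σ j.1)) * x j) := by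
    simp only [dotProduct, mulVec, Finset.mul_sum, hA, of_apply]
  rw [← he]
  have h := (le_abs_self _).trans hs
  have h' := mul_le_mul_of_nonneg_left h h1
  have h'' := mul_le_mul_of_nonneg_right hb (mul_nonneg hT0 hx)
  have h3 := mul_le_mul_of_nonneg_right hb₂ hx
  nlinarith

end Bounds

/-! ### Identifiability -/

/-- Two exponentials `b exp (-a t)` that agree at two points are equal. -/
lemma exp_ident {a a' b b' t s : ℝ} (hb : 0 < b) (hb' : 0 < b') (hts : t < s)
    (ht : b * Real.exp (-a * t) = b' * Real.exp (-a' * t))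
    (hs : b * Real.exp (-a * s) = b' * Real.exp (-a' * s)) : a = a' ∧ b = b' := by
  have key : ∀ r, b * Real.exp (-a * r) = b' * Real.exp (-a' * r) →
      Real.log b - a * r = Real.log b' - a' * r := by
    intro r hr
    have := congrArg Real.log hr
    rw [Real.log_mul hb.ne' (Real.exp_pos _).ne', Real.log_mul hb'.ne' (Real.exp_pos _).ne',
      Real.log_exp, Real.log_exp] at this
    linarith
  have h1 := key t ht
  have h2 := key s hs
  have haa : a = a' := by
    have : (a - a') * (s - t) = 0 := by linarith
    rcases mul_eq_zero.1 this with h | h <;> linarith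
  refine ⟨haa, ?_⟩
  rw [haa] at ht
  exact mul_right_cancel₀ (Real.exp_pos _).ne' ht

/-- Condition 2 bounds the distance between points at a fixed lag. -/
lemma lag_bound {d : SInf → SInf → ℝ} {σ : ℕ → SInf} (hd : SInf.SqEmb d) {c : ℝ}
    (h2 : ∀ i : ℕ, d (σ i) (σ (i + 1)) ≤ c) (k : ℕ) : ∃ C : ℝ, ∀ i, d (σ i) (σ (i + k)) ≤ C := by
  induction k with
  | zero => exact ⟨0, fun i => by simp [hd.self_eq_zero]⟩
  | succ k ih =>
    obtain ⟨C, hC⟩ := ih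
    refine ⟨2 * C + 2 * c, fun i => ?_⟩
    have := hd.triangle (σ i) (σ (i + k)) (σ (i + (k + 1)))
    have h' := h2 (i + k)
    rw [add_assoc] at h'
    linarith [hC i]

/-- Lower bound for a double sum by its diagonals at lags `0`, `1` and `k`. -/
lemma sum_lags_le {F : ℕ → ℕ → ℝ} (hF : ∀ i j, 0 ≤ F i j) {η : ℝ} {k : ℕ} (hk : 2 ≤ k)
    (h : ∀ i, η ≤ F i i + F i (i + 1) + F i (i + k)) {n : ℕ} (hn : 2 * k ≤ n) (hη : 0 ≤ η) :
    η / 2 * n ≤ ∑ i : Fin n, ∑ j : Fin n, F i j := by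
  have e : ∑ i : Fin n, ∑ j : Fin n, F i j
      = ∑ i ∈ Finset.range n, ∑ j ∈ Finset.range n, F i j := by
    rw [Finset.sum_range]
    refine Finset.sum_congr rfl fun i _ => ?_
    rw [Finset.sum_range]
  have h1 : ∑ i ∈ Finset.range (n - k), η ≤ ∑ i ∈ Finset.range n, ∑ j ∈ Finset.range n, F i j := by
    refine le_trans (Finset.sum_le_sum fun i hi => ?_)
      (Finset.sum_le_sum_of_subset_of_nonneg
        (Finset.range_mono (Nat.sub_le n k)) fun i _ _ => Finset.sum_nonneg fun j _ => hF i j)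
    rw [Finset.mem_range] at hi
    have hsub : ({i, i + 1, i + k} : Finset ℕ) ⊆ Finset.range n := by
      intro j hj
      simp only [Finset.mem_insert, Finset.mem_singleton] at hj
      rw [Finset.mem_range]
      omega
    refine le_trans (h i) (le_trans (le_of_eq ?_)
      (Finset.sum_le_sum_of_subset_of_nonneg hsub fun j _ _ => hF i j))
    rw [Finset.sum_insert (by simp; omega), Finset.sum_insert (by simp; omega),
      Finset.sum_singleton]
    ring
  rw [e]
  refine le_trans ?_ h1
  rw [Finset.sum_const, Finset.card_range, nsmul_eq_mul, Nat.cast_sub (by omega)]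
  have : (2 : ℝ) * k ≤ n := by exact_mod_cast hn
  nlinarith

/-- Identifiability: distinct parameters give covariance matrices whose squared Frobenius distance
grows at least linearly in the size. -/
lemma frobenius_identifiable {d : SInf → SInf → ℝ} {σ : ℕ → SInf} (hd : SInf.SqEmb d)
    {β c : ℝ} (hβ : 0 < β) (hc : ∀ i j : ℕ, |(i : ℝ) - (j : ℝ)| ^ β ≤ d (σ i) (σ j))
    (h2 : ∀ i : ℕ, d (σ i) (σ (i + 1)) ≤ c) {θ θ' : Fin 3 → ℝ} (hne : θ ≠ θ')
    (hθ : 0 < θ 1) (hθ' : 0 < θ' 1) :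
    ∃ η : ℝ, 0 < η ∧ ∃ N : ℕ, ∀ n, N ≤ n →
      η * n ≤ ∑ i, ∑ j, (Rmat d σ θ n i j - Rmat d σ θ' n i j) ^ 2 := by
  have hinj := sigma_injective hd hβ hc
  -- a lag at which all distances exceed all distances at lag one
  obtain ⟨k, hk2, hk⟩ : ∃ k : ℕ, 2 ≤ k ∧ c + 1 ≤ (k : ℝ) ^ β := by
    have := (tendsto_rpow_atTop hβ).comp (tendsto_natCast_atTop_atTop (R := ℝ))
    obtain ⟨k, hk⟩ := ((this.eventually_ge_atTop (c + 1)).and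
      (Filter.eventually_ge_atTop 2)).exists
    exact ⟨k, hk.2, hk.1⟩
  obtain ⟨C, hC⟩ := lag_bound hd h2 k
  set g : ℝ × ℝ → ℝ := fun p =>
    (θ 1 + θ 2 - (θ' 1 + θ' 2)) ^ 2
      + (θ 1 * Real.exp (-(θ 0) * p.1) - θ' 1 * Real.exp (-(θ' 0) * p.1)) ^ 2
      + (θ 1 * Real.exp (-(θ 0) * p.2) - θ' 1 * Real.exp (-(θ' 0) * p.2)) ^ 2 with hg
  have hgc : Continuous g := by rw [hg]; fun_prop
  have hgpos : ∀ p ∈ Set.Icc 1 c ×ˢ Set.Icc (c + 1) C, 0 < g p := by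
    rintro ⟨t, s⟩ ⟨ht, hs⟩
    simp only [Set.mem_Icc] at ht hs
    have hnn : 0 ≤ g (t, s) := by rw [hg]; positivity
    refine lt_of_le_of_ne hnn fun h0 => hne ?_
    simp only [hg] at h0
    have q1 := sq_nonneg (θ 1 + θ 2 - (θ' 1 + θ' 2))
    have q2 := sq_nonneg (θ 1 * Real.exp (-(θ 0) * t) - θ' 1 * Real.exp (-(θ' 0) * t))
    have q3 := sq_nonneg (θ 1 * Real.exp (-(θ 0) * s) - θ' 1 * Real.exp (-(θ' 0) * s))
    have z1 := pow_eq_zero_iff (two_ne_zero) |>.1 (le_antisymm (by linarith) q1)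
    have z2 := pow_eq_zero_iff (two_ne_zero) |>.1 (le_antisymm (by linarith) q2)
    have z3 := pow_eq_zero_iff (two_ne_zero) |>.1 (le_antisymm (by linarith) q3)
    obtain ⟨e0, e1⟩ := exp_ident hθ hθ' (by linarith : t < s) (sub_eq_zero.1 z2)
      (sub_eq_zero.1 z3)
    ext i
    fin_cases i
    · exact e0
    · exact e1
    · show θ 2 = θ' 2
      linarith
  obtain ⟨η, hη, hmin⟩ := (isCompact_Icc.prod isCompact_Icc).exists_forall_le'
    hgc.continuousOn hgpos
  refine ⟨η / 2, by positivity, 2 * k, fun n hn => ?_⟩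
  refine sum_lags_le
    (F := fun i j => (SInf.Kp d θ (σ i) (σ j) - SInf.Kp d θ' (σ i) (σ j)) ^ 2)
    (fun i j => sq_nonneg _) hk2 (fun i => ?_) hn hη.le
  have hd1 : 1 ≤ d (σ i) (σ (i + 1)) := one_le_dist hβ hc (by omega)
  have hdk : c + 1 ≤ d (σ i) (σ (i + k)) := by
    refine hk.trans (le_trans (le_of_eq ?_) (hc i (i + k)))
    push_cast
    rw [sub_add_cancel_left, abs_neg, abs_of_nonneg (Nat.cast_nonneg k)]
  refine (hmin (d (σ i) (σ (i + 1)), d (σ i) (σ (i + k)))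
    ⟨⟨hd1, h2 i⟩, ⟨hdk, hC i⟩⟩).trans (le_of_eq ?_)
  have hk0 : ¬ k = 0 := by omega
  simp only [hg, Kp_eq hinj, hd.self_eq_zero]
  simp [hk0]

/-! ### Consistency -/

section Main

variable {d : SInf → SInf → ℝ} {σ : ℕ → SInf}

/-- Near a wrong parameter `θ₀` the likelihood exceeds its value at the true parameter only
with vanishing probability. -/
lemma local_consistency (hd : SInf.SqEmb d) (h1 : SInf.Cond1 d σ) (h2 : SInf.Cond2 d σ)
    {θmin θmax : Fin 3 → ℝ} (hθmin : ∀ i, 0 < θmin i) (hθ : ∀ i, θmin i ≤ θmax i)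
    {θstar : EuclideanSpace ℝ (Fin 3)} (hθstar : ∀ i, θstar i ∈ Set.Icc (θmin i) (θmax i))
    {Ω : Type*} [MeasurableSpace Ω] (P : Measure Ω) [IsProbabilityMeasure P]
    {y : (n : ℕ) → Ω → (Fin n → ℝ)} (hy : ∀ n, Measurable (y n))
    (hGauss : ∀ (n : ℕ) (a : Fin n → ℝ),
      P.map (fun ω => ∑ i, a i * y n ω i) =
        gaussianReal 0
          (Real.toNNReal (∑ i, ∑ j, a i * a j * SInf.Kp d θstar (σ i.1) (σ j.1))))
    (θhat : (n : ℕ) → Ω → EuclideanSpace ℝ (Fin 3))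
    {θ₀ : EuclideanSpace ℝ (Fin 3)} (hθ₀ : ∀ i, θ₀ i ∈ Set.Icc (θmin i) (θmax i))
    (hne : θ₀ ≠ θstar) :
    ∃ U ∈ nhds θ₀, Filter.Tendsto (fun n : ℕ => P {ω | θhat n ω ∈ U ∧
      (∀ i, θhat n ω i ∈ Set.Icc (θmin i) (θmax i)) ∧
        Lfun d σ n (θhat n ω) (y n ω) ≤ Lfun d σ n θstar (y n ω)}) Filter.atTop (nhds 0) := by
  obtain ⟨β, hβ, hc⟩ := h1
  obtain ⟨c, -, hc2⟩ := h2
  have hinj := sigma_injective hd hβ hc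
  obtain ⟨T, hT0, hT⟩ := exists_rowsum_bound (half_pos (hθmin 0)) hβ
  have hpos : ∀ {θ : EuclideanSpace ℝ (Fin 3)}, (∀ i, θ i ∈ Set.Icc (θmin i) (θmax i)) →
      ∀ i, 0 < θ i := fun h i => (hθmin i).trans_le (h i).1
  have hPD : ∀ {θ : EuclideanSpace ℝ (Fin 3)}, (∀ i, θ i ∈ Set.Icc (θmin i) (θmax i)) →
      ∀ n, (Rmat d σ θ n).PosDef := fun h n =>
    Rmat_posDef hd hinj (hpos h 0).le (hpos h 1).le (hpos h 2) n
  obtain ⟨η, hη, N, hF⟩ := frobenius_identifiable hd hβ hc hc2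
    (θ := θstar) (θ' := θ₀) (fun h => hne (by ext i; exact (congrFun h i).symm))
    (hpos hθstar 1) (hpos hθ₀ 1)
  have hdot : ∀ {n : ℕ} (x : Fin n → ℝ), 0 ≤ x ⬝ᵥ x := fun x => by
    simp only [dotProduct]
    exact Finset.sum_nonneg fun i _ => mul_self_nonneg _
  set m := θmin 2 with hm_def
  have hm : 0 < m := hθmin 2
  set M := θmax 1 * T + θmax 2 with hM_def
  have hM : 0 < M := by
    have := (hθmin 1).trans_le (hθ 1)
    have := (hθmin 2).trans_le (hθ 2)
    positivity
  set B := M / m with hB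
  have hB0 : 0 < B := div_pos hM hm
  set κ := η / (2 * (B + 1) * M ^ 2) with hκ
  have hκ0 : 0 < κ := by positivity
  -- the slack allowed by `prob_lower`; it determines the neighbourhood below
  set t := min (1 / 2) (κ / (2 * (B + 2))) with ht
  have ht0 : 0 < t := lt_min (by norm_num) (by positivity)
  have ht2 : t ≤ 1 / 2 := min_le_left _ _
  have ht3 : t * (B + 2) ≤ κ / 2 := by
    have h := mul_le_mul_of_nonneg_right (min_le_right (1 / 2) (κ / (2 * (B + 2))))
      (by positivity : 0 ≤ B + 2)
    refine h.trans (le_of_eq ?_)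
    field_simp
  have hcont : Continuous fun θ : EuclideanSpace ℝ (Fin 3) =>
      (θmax 1 * |θ 0 - θ₀ 0| * (2 / θmin 0) + |θ 1 - θ₀ 1| + |θ 2 - θ₀ 2|) * T := by fun_prop
  refine ⟨{θ | (θmax 1 * |θ 0 - θ₀ 0| * (2 / θmin 0) + |θ 1 - θ₀ 1| + |θ 2 - θ₀ 2|) * T
      < t * m}, ?_, ?_⟩
  · refine (isOpen_lt hcont continuous_const).mem_nhds ?_
    simp only [Set.mem_ofPred_eq, sub_self, abs_zero, mul_zero, zero_mul, add_zero]
    positivity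
  have hlim : Filter.Tendsto (fun n : ℕ => ENNReal.ofReal (8 * (B + 1) ^ 2 / κ ^ 2 / n))
      Filter.atTop (nhds 0) := by
    rw [← ENNReal.ofReal_zero]
    exact ENNReal.tendsto_ofReal (tendsto_const_div_atTop_nhds_zero_nat _)
  refine tendsto_of_tendsto_of_tendsto_of_le_of_le' tendsto_const_nhds hlim
    (Filter.Eventually.of_forall fun _ => zero_le) ?_
  filter_upwards [Filter.eventually_ge_atTop N, Filter.eventually_gt_atTop 0] with n hnN hn0
  have hn0' : (0 : ℝ) < n := by exact_mod_cast hn0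
  have hmA : ∀ {θ : EuclideanSpace ℝ (Fin 3)}, (∀ i, θ i ∈ Set.Icc (θmin i) (θmax i)) →
      ∀ x : Fin n → ℝ, m * (x ⬝ᵥ x) ≤ x ⬝ᵥ (Rmat d σ θ n *ᵥ x) := fun h x =>
    (mul_le_mul_of_nonneg_right (h 2).1 (hdot x)).trans
      (Rmat_lower hd hinj (hpos h 0).le (hpos h 1).le n x)
  have hMA : ∀ {θ : EuclideanSpace ℝ (Fin 3)}, (∀ i, θ i ∈ Set.Icc (θmin i) (θmax i)) →
      ∀ x : Fin n → ℝ, x ⬝ᵥ (Rmat d σ θ n *ᵥ x) ≤ M * (x ⬝ᵥ x) := fun h x =>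
    Rmat_upper hd hinj (hθmin 0) (h 0).1 (hpos h 1).le (h 1).2 (h 2).2 hT0 hc hT n x
  have hG : ∀ a : Fin n → ℝ, P.map (fun ω => a ⬝ᵥ y n ω)
      = gaussianReal 0 (a ⬝ᵥ (Rmat d σ θstar n *ᵥ a)).toNNReal := by
    intro a
    have h := hGauss n a
    have e : a ⬝ᵥ (Rmat d σ θstar n *ᵥ a)
        = ∑ i, ∑ j, a i * a j * SInf.Kp d θstar (σ i.1) (σ j.1) := by
      simp only [dotProduct, mulVec, Finset.mul_sum, Rmat, of_apply]
      exact Finset.sum_congr rfl fun i _ => Finset.sum_congr rfl fun j _ => by ring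
    rw [e]
    exact h
  refine le_trans (measure_mono ?_) (prob_lower (hPD hθ₀ n) (hPD hθstar n) (hy n) hG hm hM hη hn0
    (hmA hθ₀) (hMA hθ₀) (hMA hθstar) (hF n hnN) hB hκ ht0.le (by linarith) ht3)
  rintro ω ⟨hU, hΘ, hL⟩
  simp only [Set.mem_ofPred_eq] at hU ⊢
  have hpert := perturb_lower (hPD hθ₀ n) (hPD hΘ n) hm (hmA hθ₀) (δ := t * m)
    (fun x => (Rmat_sub_quad hd hinj (hθmin 0) (hΘ 0).1 (hθ₀ 0).1 (hpos hΘ 1).le (hΘ 1).2 hc hT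
      n x).trans (mul_le_mul_of_nonneg_right hU.le (hdot x)))
    (mul_div_cancel_right₀ t hm.ne').symm ht0.le ht2 (y n ω)
  refine hpert.trans ?_
  simp only [Lfun, ← mul_add] at hL
  exact le_of_mul_le_mul_left hL (by positivity)

end Main

lemma sqEmb_of_cases {d : SInf → SInf → ℝ}
    (hd : d = SInf.dKen ∨ d = SInf.dHam ∨ d = SInf.dFoot ∨ d = SInf.dS2) : SInf.SqEmb d := by
  rcases hd with rfl | rfl | rfl | rfl
  exacts [SInf.sqEmb_dKen, SInf.sqEmb_dHam, SInf.sqEmb_dFoot, SInf.sqEmb_dS2]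

/-- Theorem 2 (consistency): under Conditions 1 and 2, if `y⁽ⁿ⁾` is a centered Gaussian
vector with covariance `R_{θ*}` and `θ̂_n` is a measurable maximum likelihood estimator,
then `θ̂_n → θ*` in probability.  A random vector `y` is centered Gaussian with covariance
`R` iff each linear functional `⟨a, y⟩` is `N(0, aᵀRa)`-distributed. -/
theorem ml_estimator_consistent (d : SInf → SInf → ℝ)
    (hd : d = SInf.dKen ∨ d = SInf.dHam ∨ d = SInf.dFoot ∨ d = SInf.dS2)
    (σ : ℕ → SInf) (h1 : SInf.Cond1 d σ) (h2 : SInf.Cond2 d σ)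
    (θmin θmax : Fin 3 → ℝ) (hθmin : ∀ i, 0 < θmin i) (hθ : ∀ i, θmin i ≤ θmax i)
    (θstar : EuclideanSpace ℝ (Fin 3)) (hθstar : ∀ i, θstar i ∈ Set.Icc (θmin i) (θmax i))
    (Ω : Type*) [MeasurableSpace Ω] (P : Measure Ω) [IsProbabilityMeasure P]
    (y : (n : ℕ) → Ω → (Fin n → ℝ)) (hy : ∀ n, Measurable (y n))
    (hGauss : ∀ (n : ℕ) (a : Fin n → ℝ),
      P.map (fun ω => ∑ i, a i * y n ω i) =
        gaussianReal 0
          (Real.toNNReal (∑ i, ∑ j, a i * a j * SInf.Kp d θstar (σ i.1) (σ j.1))))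
    (θhat : (n : ℕ) → Ω → EuclideanSpace ℝ (Fin 3))
    (hθhatMeas : ∀ n, Measurable (θhat n))
    (hargmin : ∀ n : ℕ, ∀ᵐ ω ∂P,
      (∀ i, θhat n ω i ∈ Set.Icc (θmin i) (θmax i)) ∧
      ∀ θ : EuclideanSpace ℝ (Fin 3), (∀ i, θ i ∈ Set.Icc (θmin i) (θmax i)) →
        Lfun d σ n (θhat n ω) (y n ω) ≤ Lfun d σ n θ (y n ω)) :
    ∀ ε : ℝ, 0 < ε →
      Filter.Tendsto (fun n : ℕ => P {ω | ε < ‖θhat n ω - θstar‖})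
        Filter.atTop (nhds 0) := by
  intro ε hε
  have hsq := sqEmb_of_cases hd
  set K : Set (EuclideanSpace ℝ (Fin 3)) :=
    {θ | (∀ i, θ i ∈ Set.Icc (θmin i) (θmax i)) ∧ ε ≤ ‖θ - θstar‖} with hK
  have hKc : IsCompact K := by
    have hbox : IsCompact {θ : EuclideanSpace ℝ (Fin 3) | ∀ i, θ i ∈ Set.Icc (θmin i) (θmax i)} := by
      have h := (isCompact_univ_pi fun i : Fin 3 =>
        (isCompact_Icc : IsCompact (Set.Icc (θmin i) (θmax i)))).image
          (PiLp.continuous_toLp 2 fun _ : Fin 3 => ℝ)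
      convert h using 1
      ext θ
      constructor
      · exact fun hθ' => ⟨WithLp.ofLp θ, fun i _ => hθ' i, rfl⟩
      · rintro ⟨v, hv, rfl⟩
        exact fun i => hv i (Set.mem_univ i)
    have hcl : IsClosed {θ : EuclideanSpace ℝ (Fin 3) | ε ≤ ‖θ - θstar‖} :=
      isClosed_le continuous_const (by fun_prop)
    exact hbox.inter_right hcl
  -- a finite subcover of `K` by the neighbourhoods of `local_consistency`
  have hmain : Filter.Tendsto (fun n : ℕ => P {ω | θhat n ω ∈ K ∧
      (∀ i, θhat n ω i ∈ Set.Icc (θmin i) (θmax i)) ∧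
        Lfun d σ n (θhat n ω) (y n ω) ≤ Lfun d σ n θstar (y n ω)}) Filter.atTop (nhds 0) := by
    refine hKc.induction_on (p := fun s => Filter.Tendsto (fun n : ℕ => P {ω | θhat n ω ∈ s ∧
      (∀ i, θhat n ω i ∈ Set.Icc (θmin i) (θmax i)) ∧
        Lfun d σ n (θhat n ω) (y n ω) ≤ Lfun d σ n θstar (y n ω)}) Filter.atTop (nhds 0))
      ?_ ?_ ?_ ?_
    · simp
    · intro s s' hss hs'
      refine tendsto_of_tendsto_of_tendsto_of_le_of_le tendsto_const_nhds hs'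
        (fun _ => zero_le) fun n => measure_mono fun ω hω => ⟨hss hω.1, hω.2⟩
    · intro s s' hs hs'
      have h := hs.add hs'
      rw [add_zero] at h
      refine tendsto_of_tendsto_of_tendsto_of_le_of_le tendsto_const_nhds h
        (fun _ => zero_le) fun n => le_trans (measure_mono ?_) (measure_union_le _ _)
      rintro ω ⟨hω | hω, hω'⟩
      · exact Or.inl ⟨hω, hω'⟩
      · exact Or.inr ⟨hω, hω'⟩
    · rintro θ₀ ⟨hθ₀, hdist⟩
      have hne : θ₀ ≠ θstar := by
        rintro rfl
        simp only [sub_self, norm_zero] at hdist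
        linarith
      obtain ⟨U, hU, hlim⟩ := local_consistency hsq h1 h2 hθmin hθ hθstar P hy hGauss θhat hθ₀ hne
      exact ⟨U, mem_nhdsWithin_of_mem_nhds hU, hlim⟩
  refine tendsto_of_tendsto_of_tendsto_of_le_of_le tendsto_const_nhds hmain
    (fun _ => zero_le) fun n => measure_mono_ae ?_
  filter_upwards [hargmin n] with ω hω hε'
  exact ⟨⟨hω.1, le_of_lt hε'⟩, hω.1, hω.2 θstar hθstar⟩
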